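/- arXiv:1706.05747 — 3 statements merged into one kernel-verified Lean document; each statement's English description precedes it below -/
import Mathlib

section
/- Let μ be a σ-finite measure on (0,∞) satisfying assumption (H): ∫₀^∞ (r ∨ r^p) μ(dr) < ∞ for some 1 < p < 2. For N ≥ 1 and k ≥ 1 set w_{k,N} = (1/(k+1)!) ∫₀^∞ (Nr)^{k+1} e^{−Nr} μ(dr). Then for every bounded continuous function h : [0,∞) → ℝ, ∑_{k≥1} h(k/N) ((k/N)² ∧ 1) w_{k,N} → ∫₀^∞ h(z) (z² ∧ 1) μ(dz) as N → ∞; that is, the finite measures π̄_N = ∑_{k≥1} ((k/N)² ∧ 1) w_{k,N} δ_{k/N} converge weakly to π̄(dz) = (z² ∧ 1) μ(dz). -/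
open MeasureTheory

/-!
The sum `∑_{k≥1} g(k/N) w_{k,N}` is the `μ`-integral over `r > 0` of `𝔼[g((X - 1)/N); X ≥ 2]`,
where `X` is Poisson of mean `N r`. Since `X - 1` has mean `N r - 1` and variance `N r`, Chebyshev's
argument shows that this average tends to `g r` wherever `g` is continuous. If moreover
`|g z| ≤ B (z² ∧ 1)`, the second factorial moment `𝔼[X (X - 1)] = (N r)²` bounds the average by
`B (r² ∧ 1)`, so dominated convergence applies as soon as `r² ∧ 1` is `μ`-integrable.
-/

open Filter Set Topology
open scoped Nat

section PoissonWeight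

/-- The mass `e^{-a} aⁿ / n!` that the Poisson law of mean `a` gives to `n`. The mean is a real
number, rather than an element of `ℝ≥0` as in `ProbabilityTheory.poissonMeasure`, so that the mass
can be integrated in `a` without coercions. -/
noncomputable def poissonWeight (a : ℝ) (n : ℕ) : ℝ :=
  Real.exp (-a) * a ^ n / n !

lemma poissonWeight_nonneg {a : ℝ} (ha : 0 ≤ a) (n : ℕ) : 0 ≤ poissonWeight a n := by
  unfold poissonWeight
  positivity

@[fun_prop]
lemma continuous_poissonWeight (n : ℕ) : Continuous fun a => poissonWeight a n := by
  unfold poissonWeight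
  fun_prop

lemma hasSum_poissonWeight (a : ℝ) : HasSum (poissonWeight a) 1 := by
  have h := (NormedSpace.expSeries_div_hasSum_exp a).mul_left (Real.exp (-a))
  rw [← Real.exp_eq_exp_ℝ, ← Real.exp_add, neg_add_cancel, Real.exp_zero] at h
  exact h.congr_fun fun n => mul_div_assoc _ _ _

lemma poissonWeight_add_mul_descFactorial (a : ℝ) (n j : ℕ) :
    poissonWeight a (n + j) * (n + j).descFactorial j = a ^ j * poissonWeight a n := by
  have hfact : ((n + j)! : ℝ) = n ! * (n + j).descFactorial j := by
    have h := Nat.factorial_mul_descFactorial (Nat.le_add_left j n)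
    rw [Nat.add_sub_cancel] at h
    exact_mod_cast h.symm
  have hdesc : ((n + j).descFactorial j : ℝ) ≠ 0 := by
    simp [Nat.descFactorial_eq_zero_iff_lt]
  unfold poissonWeight
  rw [hfact]
  field_simp
  ring

lemma hasSum_poissonWeight_mul_descFactorial (a : ℝ) (j : ℕ) :
    HasSum (fun n => poissonWeight a n * n.descFactorial j) (a ^ j) := by
  have hhead : ∑ n ∈ Finset.range j, poissonWeight a n * n.descFactorial j = 0 :=
    Finset.sum_eq_zero fun n hn => by
      rw [Nat.descFactorial_eq_zero_iff_lt.2 (Finset.mem_range.1 hn), Nat.cast_zero, mul_zero]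
  rw [← hasSum_nat_add_iff' j, hhead, sub_zero]
  simpa only [poissonWeight_add_mul_descFactorial, mul_one]
    using (hasSum_poissonWeight a).mul_left (a ^ j)

lemma hasSum_poissonWeight_mul_sq_sub (a c : ℝ) :
    HasSum (fun n : ℕ => poissonWeight a n * (n - c) ^ 2) (a + (a - c) ^ 2) := by
  have h := ((hasSum_poissonWeight_mul_descFactorial a 2).add
    ((hasSum_poissonWeight_mul_descFactorial a 1).mul_left (1 - 2 * c))).add
    ((hasSum_poissonWeight a).mul_left (c ^ 2))
  convert! h using 1
  · funext n
    rw [Nat.cast_descFactorial_two, Nat.descFactorial_one]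
    ring
  · ring

end PoissonWeight

section LawOfLargeNumbers

variable {E : Type*} [NormedAddCommGroup E]

lemma exists_norm_sub_le_add_mul_sq_dist {X : Type*} [PseudoMetricSpace X] {f : X → E} {B : ℝ}
    {x : X} (hB : ∀ y, ‖f y‖ ≤ B) (hf : ContinuousAt f x) {ε : ℝ} (hε : 0 < ε) :
    ∃ C, ∀ y, ‖f y - f x‖ ≤ ε + C * dist y x ^ 2 := by
  obtain ⟨δ, hδ, hnear⟩ := Metric.continuousAt_iff.1 hf ε hε
  have hB0 : 0 ≤ B := (norm_nonneg _).trans (hB x)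
  refine ⟨2 * B / δ ^ 2, fun y => ?_⟩
  rcases lt_or_ge (dist y x) δ with hy | hy
  · have hclose : ‖f y - f x‖ < ε := dist_eq_norm (f y) (f x) ▸ hnear hy
    exact hclose.le.trans (le_add_of_nonneg_right (by positivity))
  · calc ‖f y - f x‖ ≤ ‖f y‖ + ‖f x‖ := norm_sub_le _ _
      _ ≤ 2 * B / δ ^ 2 * δ ^ 2 := by
        rw [div_mul_cancel₀ _ (by positivity)]
        linarith [hB y, hB x]
      _ ≤ 2 * B / δ ^ 2 * dist y x ^ 2 := by gcongr
      _ ≤ ε + 2 * B / δ ^ 2 * dist y x ^ 2 := le_add_of_nonneg_left hε.le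

variable [NormedSpace ℝ E] [CompleteSpace E]

lemma norm_tsum_poissonWeight_smul_sub_le {f : ℝ → E} {r t ε C : ℝ} (hr : 0 ≤ r) (ht : 0 < t)
    (hf : ∀ z, ‖f z - f r‖ ≤ ε + C * (z - r) ^ 2) (c : ℝ) :
    ‖∑' n : ℕ, poissonWeight (t * r) n • f ((n - c) / t) - f r‖ ≤
      ε + C * ((t * r + c ^ 2) / t ^ 2) := by
  have hdom : HasSum (fun n : ℕ => poissonWeight (t * r) n * (ε + C * ((n - c) / t - r) ^ 2))
      (ε + C * ((t * r + c ^ 2) / t ^ 2)) := by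
    convert! ((hasSum_poissonWeight (t * r)).mul_left ε).add
      ((hasSum_poissonWeight_mul_sq_sub (t * r) (c + t * r)).mul_left (C / t ^ 2)) using 1
    · funext n
      field_simp
      ring
    · field_simp
      ring
  have hterm : ∀ n : ℕ, ‖poissonWeight (t * r) n • (f ((n - c) / t) - f r)‖ ≤
      poissonWeight (t * r) n * (ε + C * ((n - c) / t - r) ^ 2) := fun n => by
    have hw := poissonWeight_nonneg (mul_nonneg ht.le hr) n
    rw [norm_smul, Real.norm_of_nonneg hw]
    exact mul_le_mul_of_nonneg_left (hf _) hw
  have hsum := (Summable.of_norm_bounded hdom.summable hterm).hasSum.add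
    ((hasSum_poissonWeight (t * r)).smul_const (f r))
  simp only [← smul_add, sub_add_cancel, one_smul] at hsum
  rw [hsum.tsum_eq, add_sub_cancel_right]
  exact tsum_of_norm_bounded hdom hterm

lemma tendsto_tsum_poissonWeight_smul {f : ℝ → E} {B r : ℝ} (hB : ∀ z, ‖f z‖ ≤ B) (hr : 0 ≤ r)
    (hf : ContinuousAt f r) (c : ℝ) :
    Tendsto (fun t => ∑' n : ℕ, poissonWeight (t * r) n • f ((n - c) / t)) atTop (𝓝 (f r)) := by
  refine Metric.tendsto_nhds.2 fun ε hε => ?_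
  obtain ⟨C, hC⟩ := exists_norm_sub_le_add_mul_sq_dist hB hf (half_pos hε)
  simp only [Real.dist_eq, sq_abs] at hC
  have hvar : Tendsto (fun t : ℝ => C * (r * t⁻¹ + c ^ 2 * t⁻¹ ^ 2)) atTop (𝓝 0) := by
    simpa using ((tendsto_inv_atTop_zero.const_mul r).add
      ((tendsto_inv_atTop_zero.pow 2).const_mul (c ^ 2))).const_mul C
  filter_upwards [hvar.eventually_lt_const (half_pos hε), eventually_gt_atTop 0] with t hsmall ht
  rw [dist_eq_norm]
  calc ‖∑' n : ℕ, poissonWeight (t * r) n • f ((n - c) / t) - f r‖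
      ≤ ε / 2 + C * ((t * r + c ^ 2) / t ^ 2) := norm_tsum_poissonWeight_smul_sub_le hr ht hC c
    _ = ε / 2 + C * (r * t⁻¹ + c ^ 2 * t⁻¹ ^ 2) := by field_simp
    _ < ε := by linarith

end LawOfLargeNumbers

section PoissonAverage

variable {E : Type*} [NormedAddCommGroup E] {g : ℝ → E} {B t r : ℝ}

lemma norm_le_of_norm_le_mul_min (hg : ∀ z, 0 < z → ‖g z‖ ≤ B * min (z ^ 2) 1) :
    ∀ z, 0 < z → ‖g z‖ ≤ B := by
  have hB : 0 ≤ B := by simpa using (norm_nonneg _).trans (hg 1 one_pos)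
  exact fun z hz => (hg z hz).trans (mul_le_of_le_one_right hB (min_le_right _ _))

variable [NormedSpace ℝ E]

/-- The expectation `𝔼[g((X - 1)/t); X ≥ 2]` for a Poisson variable `X` of mean `t r`, summed over
`k = X - 2`. For `t = N` its `μ`-integral in `r` is `∑_{k≥1} w_{k,N} g(k/N)`. -/
noncomputable def poissonAverage (g : ℝ → E) (t r : ℝ) : E :=
  ∑' k : ℕ, poissonWeight (t * r) (k + 2) • g ((k + 1) / t)

lemma norm_poissonWeight_smul_le {G : ℝ → ℝ} (hg : ∀ z, 0 < z → ‖g z‖ ≤ G z) (ht : 0 < t)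
    (hr : 0 ≤ r) (k : ℕ) :
    ‖poissonWeight (t * r) (k + 2) • g ((k + 1) / t)‖ ≤
      poissonWeight (t * r) (k + 2) * G ((k + 1) / t) := by
  have hw := poissonWeight_nonneg (mul_nonneg ht.le hr) (k + 2)
  rw [norm_smul, Real.norm_of_nonneg hw]
  exact mul_le_mul_of_nonneg_left (hg _ (by positivity)) hw

lemma summable_poissonAverage [CompleteSpace E] (hg : ∀ z, 0 < z → ‖g z‖ ≤ B) (ht : 0 < t)
    (hr : 0 ≤ r) :
    Summable fun k : ℕ => poissonWeight (t * r) (k + 2) • g ((k + 1) / t) :=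
  have htail := (summable_nat_add_iff 2).2 (hasSum_poissonWeight (t * r)).summable
  .of_norm_bounded (htail.mul_right B) (norm_poissonWeight_smul_le hg ht hr)

lemma norm_poissonAverage_le_of_norm_le (hg : ∀ z, 0 < z → ‖g z‖ ≤ B) (ht : 0 < t) (hr : 0 ≤ r) :
    ‖poissonAverage g t r‖ ≤ B := by
  have hB : 0 ≤ B := (norm_nonneg _).trans (hg 1 one_pos)
  have htail := (hasSum_nat_add_iff' 2).2 (hasSum_poissonWeight (t * r))
  refine (tsum_of_norm_bounded (htail.mul_right B) (norm_poissonWeight_smul_le hg ht hr)).trans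
    (mul_le_of_le_one_left hB (sub_le_self _ (Finset.sum_nonneg fun n _ => ?_)))
  exact poissonWeight_nonneg (mul_nonneg ht.le hr) n

lemma norm_poissonAverage_le_of_norm_le_sq (hg : ∀ z, 0 < z → ‖g z‖ ≤ B * z ^ 2) (ht : 0 < t)
    (hr : 0 ≤ r) :
    ‖poissonAverage g t r‖ ≤ B * r ^ 2 := by
  have hB : 0 ≤ B := by simpa using (norm_nonneg _).trans (hg 1 one_pos)
  have hmoment : HasSum (fun k : ℕ => B / t ^ 2 *
      (poissonWeight (t * r) (k + 2) * (k + 2).descFactorial 2)) (B * r ^ 2) := by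
    simp only [poissonWeight_add_mul_descFactorial]
    convert! ((hasSum_poissonWeight (t * r)).mul_left ((t * r) ^ 2)).mul_left (B / t ^ 2) using 1
    field_simp
  refine tsum_of_norm_bounded hmoment fun k =>
    (norm_poissonWeight_smul_le hg ht hr k).trans ?_
  have hw := poissonWeight_nonneg (mul_nonneg ht.le hr) (k + 2)
  have hsq : ((k : ℝ) + 1) ^ 2 ≤ (k + 2).descFactorial 2 := by
    rw [Nat.cast_descFactorial_two]
    push_cast
    nlinarith [k.cast_nonneg (α := ℝ)]
  calc poissonWeight (t * r) (k + 2) * (B * ((k + 1) / t) ^ 2)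
      = B / t ^ 2 * (poissonWeight (t * r) (k + 2) * ((k : ℝ) + 1) ^ 2) := by
        field_simp
    _ ≤ B / t ^ 2 * (poissonWeight (t * r) (k + 2) * (k + 2).descFactorial 2) := by
        gcongr

lemma norm_poissonAverage_le_of_norm_le_min (hg : ∀ z, 0 < z → ‖g z‖ ≤ B * min (z ^ 2) 1)
    (ht : 0 < t) (hr : 0 ≤ r) :
    ‖poissonAverage g t r‖ ≤ B * min (r ^ 2) 1 := by
  have hB : 0 ≤ B := by simpa using (norm_nonneg _).trans (hg 1 one_pos)
  simp only [mul_min_of_nonneg _ _ hB, mul_one, le_min_iff] at hg ⊢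
  exact ⟨norm_poissonAverage_le_of_norm_le_sq (fun z hz => (hg z hz).1) ht hr,
    norm_poissonAverage_le_of_norm_le (fun z hz => (hg z hz).2) ht hr⟩

lemma poissonAverage_eq_tsum_indicator (ht : 0 < t) :
    poissonAverage g t r =
      ∑' n : ℕ, poissonWeight (t * r) n • (Ioi 0).indicator g ((n - 1) / t) := by
  have hsupp : Function.support
      (fun n : ℕ => poissonWeight (t * r) n • (Ioi 0).indicator g ((n - 1) / t)) ⊆
      range (· + 2) := fun n hn => by
    refine ⟨n - 2, Nat.sub_add_cancel ?_⟩
    by_contra! hlt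
    have hle : ((n : ℝ) - 1) / t ≤ 0 :=
      div_nonpos_of_nonpos_of_nonneg (sub_nonpos.2 (by exact_mod_cast Nat.lt_succ_iff.1 hlt)) ht.le
    exact hn (by simp only [indicator_of_notMem (notMem_Ioi.2 hle), smul_zero])
  rw [← (add_left_injective 2).tsum_eq hsupp]
  refine tsum_congr fun k => ?_
  have hshift : ((k + 2 : ℕ) : ℝ) - 1 = k + 1 := by push_cast; ring
  have hpos : 0 < ((k : ℝ) + 1) / t := by positivity
  rw [hshift, indicator_of_mem (mem_Ioi.2 hpos)]

lemma tendsto_poissonAverage [CompleteSpace E] (hg : ∀ z, 0 < z → ‖g z‖ ≤ B) (hr : 0 < r)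
    (hcont : ContinuousAt g r) :
    Tendsto (fun t => poissonAverage g t r) atTop (𝓝 (g r)) := by
  set f : ℝ → E := (Ioi 0).indicator g with hf
  have hfB : ∀ z, ‖f z‖ ≤ B := fun z => by
    by_cases hz : z ∈ Ioi 0
    · simpa only [hf, indicator_of_mem hz] using hg z hz
    · simpa only [hf, indicator_of_notMem hz, norm_zero] using (norm_nonneg _).trans (hg 1 one_pos)
  have hfg : f =ᶠ[𝓝 r] g := by
    filter_upwards [Ioi_mem_nhds hr] with z hz using indicator_of_mem hz g
  have hlim := tendsto_tsum_poissonWeight_smul hfB hr.le (hcont.congr hfg.symm) 1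
  rw [hfg.eq_of_nhds] at hlim
  refine hlim.congr' ?_
  filter_upwards [eventually_gt_atTop 0] with t ht using (poissonAverage_eq_tsum_indicator ht).symm

end PoissonAverage

section Mixture

variable {E : Type*} [NormedAddCommGroup E] [NormedSpace ℝ E] [CompleteSpace E] {μ : Measure ℝ}
  {g : ℝ → E} {B t : ℝ}

lemma aestronglyMeasurable_poissonAverage (hg : ∀ z, 0 < z → ‖g z‖ ≤ B) (ht : 0 < t) :
    AEStronglyMeasurable (poissonAverage g t) (μ.restrict (Ioi 0)) := by
  refine aestronglyMeasurable_of_tendsto_ae atTop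
    (f := fun m r => ∑ k ∈ Finset.range m, poissonWeight (t * r) (k + 2) • g ((k + 1) / t))
    (fun m => Continuous.aestronglyMeasurable (by fun_prop)) ?_
  filter_upwards [ae_restrict_mem measurableSet_Ioi] with r hr
  exact (summable_poissonAverage hg ht (mem_Ioi.1 hr).le).hasSum.tendsto_sum_nat

lemma integrableOn_poissonAverage (hμ : IntegrableOn (fun r => min (r ^ 2) 1) (Ioi 0) μ)
    (hg : ∀ z, 0 < z → ‖g z‖ ≤ B * min (z ^ 2) 1) (ht : 0 < t) :
    IntegrableOn (poissonAverage g t) (Ioi 0) μ := by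
  refine (hμ.const_mul B).mono'
    (aestronglyMeasurable_poissonAverage (norm_le_of_norm_le_mul_min hg) ht) ?_
  filter_upwards [ae_restrict_mem measurableSet_Ioi] with r hr
  exact norm_poissonAverage_le_of_norm_le_min hg ht (mem_Ioi.1 hr).le

lemma hasSum_integral_poissonWeight_smul
    (hμ : IntegrableOn (fun r => min (r ^ 2) 1) (Ioi 0) μ)
    (hg : ∀ z, 0 < z → ‖g z‖ ≤ B * min (z ^ 2) 1) (ht : 0 < t) :
    HasSum (fun k : ℕ => (∫ r in Ioi 0, poissonWeight (t * r) (k + 2) ∂μ) • g ((k + 1) / t))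
      (∫ r in Ioi 0, poissonAverage g t r ∂μ) := by
  have hB : 0 ≤ B := by simpa using (norm_nonneg _).trans (hg 1 one_pos)
  set G : ℝ → ℝ := fun z => B * min (z ^ 2) 1
  have hG : ∀ z, 0 < z → ‖G z‖ ≤ B * min (z ^ 2) 1 := fun z _ =>
    (Real.norm_of_nonneg (by positivity)).le
  simp only [← integral_smul_const]
  refine hasSum_integral_of_dominated_convergence
    (fun (k : ℕ) r => poissonWeight (t * r) (k + 2) • G ((k + 1) / t))
    (fun k => Continuous.aestronglyMeasurable (by fun_prop)) (fun k => ?_) ?_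
    (integrableOn_poissonAverage hμ hG ht) ?_
  all_goals filter_upwards [ae_restrict_mem measurableSet_Ioi] with r hr
  · exact norm_poissonWeight_smul_le hg ht (mem_Ioi.1 hr).le k
  · exact summable_poissonAverage (norm_le_of_norm_le_mul_min hG) ht (mem_Ioi.1 hr).le
  · exact (summable_poissonAverage (norm_le_of_norm_le_mul_min hg) ht (mem_Ioi.1 hr).le).hasSum

lemma tendsto_integral_poissonAverage
    (hμ : IntegrableOn (fun r => min (r ^ 2) 1) (Ioi 0) μ)
    (hg : ∀ z, 0 < z → ‖g z‖ ≤ B * min (z ^ 2) 1)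
    (hcont : ∀ᵐ r ∂μ.restrict (Ioi 0), ContinuousAt g r) :
    Tendsto (fun t => ∫ r in Ioi 0, poissonAverage g t r ∂μ) atTop
      (𝓝 (∫ r in Ioi 0, g r ∂μ)) := by
  have hgB := norm_le_of_norm_le_mul_min hg
  refine tendsto_integral_filter_of_dominated_convergence (fun r => B * min (r ^ 2) 1) ?_ ?_
    (hμ.const_mul B) ?_
  · filter_upwards [eventually_gt_atTop 0] with t ht
    exact aestronglyMeasurable_poissonAverage hgB ht
  · filter_upwards [eventually_gt_atTop 0] with t ht
    filter_upwards [ae_restrict_mem measurableSet_Ioi] with r hr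
    exact norm_poissonAverage_le_of_norm_le_min hg ht (mem_Ioi.1 hr).le
  · filter_upwards [ae_restrict_mem measurableSet_Ioi, hcont] with r hr hr_cont
    exact tendsto_poissonAverage hgB hr hr_cont

end Mixture

lemma integrableOn_min_sq_one_of_max_rpow {μ : Measure ℝ} {p : ℝ}
    (hH : IntegrableOn (fun r => max r (r ^ p)) (Ioi 0) μ) :
    IntegrableOn (fun r => min (r ^ 2) 1) (Ioi 0) μ := by
  refine hH.mono' (Continuous.aestronglyMeasurable (by fun_prop)) ?_
  filter_upwards [ae_restrict_mem measurableSet_Ioi] with r (hr : 0 < r)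
  rw [Real.norm_of_nonneg (by positivity)]
  calc min (r ^ 2) 1 ≤ r := by
        rcases le_total r 1 with h1 | h1
        · exact (min_le_left _ _).trans (by nlinarith)
        · exact (min_le_right _ _).trans h1
    _ ≤ max r (r ^ p) := le_max_left _ _

theorem stmt14_general {E : Type*} [NormedAddCommGroup E] [NormedSpace ℝ E] [CompleteSpace E]
    (μ : Measure ℝ) (hμ : IntegrableOn (fun r => min (r ^ 2) 1) (Ioi 0) μ)
    (w : ℕ → ℕ → ℝ)
    (hw : ∀ N k : ℕ, 1 ≤ N → 1 ≤ k → w N k =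
      (1 / (Nat.factorial (k + 1) : ℝ)) *
        ∫ r in Ioi (0 : ℝ), ((N : ℝ) * r) ^ (k + 1) * Real.exp (-(N : ℝ) * r) ∂μ)
    (h : ℝ → E) (hcont : ∀ᵐ r ∂μ.restrict (Ioi 0), ContinuousAt h r)
    (hbdd : ∃ B : ℝ, ∀ z : ℝ, 0 < z → ‖h z‖ ≤ B) :
    Tendsto
      (fun N : ℕ => ∑' k : ℕ,
        (min ((((k : ℝ) + 1) / N) ^ 2) 1 * w N (k + 1)) • h (((k : ℝ) + 1) / N))
      atTop (𝓝 (∫ z in Ioi (0 : ℝ), min (z ^ 2) 1 • h z ∂μ)) := by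
  obtain ⟨B, hB⟩ := hbdd
  set g : ℝ → E := fun z => min (z ^ 2) 1 • h z
  have hg : ∀ z, 0 < z → ‖g z‖ ≤ B * min (z ^ 2) 1 := fun z hz => by
    rw [norm_smul, Real.norm_of_nonneg (by positivity), mul_comm]
    gcongr
    exact hB z hz
  have hgcont : ∀ᵐ r ∂μ.restrict (Ioi 0), ContinuousAt g r := by
    filter_upwards [hcont] with r hr
    fun_prop
  refine ((tendsto_integral_poissonAverage hμ hg hgcont).comp
    tendsto_natCast_atTop_atTop).congr' ?_
  filter_upwards [eventually_ge_atTop 1] with N hN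
  have hweight : ∀ k : ℕ, w N (k + 1) = ∫ r in Ioi 0, poissonWeight (N * r) (k + 2) ∂μ := by
    intro k
    rw [hw N (k + 1) hN (Nat.le_add_left 1 k), ← integral_const_mul]
    congr 1 with r
    rw [poissonWeight, neg_mul]
    ring
  rw [Function.comp_apply,
    ← (hasSum_integral_poissonWeight_smul hμ hg (Nat.cast_pos.2 hN)).tsum_eq]
  simp only [g, hweight, smul_smul, mul_comm]

/-- Under assumption (H), the finite measures
`π̄_N = ∑_{k≥1} ((k/N)² ∧ 1) w_{k,N} δ_{k/N}` converge weakly to `(z² ∧ 1) μ(dz)`: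
for every bounded continuous `h : [0,∞) → ℝ`,
`∑_{k≥1} h(k/N) ((k/N)² ∧ 1) w_{k,N} → ∫ h(z)(z² ∧ 1) μ(dz)`. -/
theorem stmt14 (μ : Measure ℝ) [SigmaFinite μ]
    (p : ℝ) (hp1 : 1 < p) (hp2 : p < 2)
    (hH : Integrable (fun r => max r (r ^ p)) (μ.restrict (Set.Ioi 0)))
    (w : ℕ → ℕ → ℝ)
    (hw : ∀ N k : ℕ, 1 ≤ N → 1 ≤ k → w N k =
      (1 / (Nat.factorial (k + 1) : ℝ)) *
        ∫ r in Set.Ioi (0:ℝ), ((N:ℝ) * r) ^ (k + 1) * Real.exp (-(N:ℝ) * r) ∂μ) :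
    ∀ h : ℝ → ℝ, ContinuousOn h (Set.Ici 0) →
      (∃ B : ℝ, ∀ z : ℝ, 0 ≤ z → |h z| ≤ B) →
      Filter.Tendsto
        (fun N : ℕ => ∑' k : ℕ,
          h (((k:ℝ) + 1) / N) * min ((((k:ℝ) + 1) / N) ^ 2) 1 * w N (k + 1))
        Filter.atTop (nhds (∫ z in Set.Ioi (0:ℝ), h z * min (z ^ 2) 1 ∂μ)) := by
  rintro h hcont ⟨B, hB⟩
  simpa only [smul_eq_mul, mul_comm, mul_left_comm, mul_assoc] using
    stmt14_general μ (integrableOn_min_sq_one_of_max_rpow hH) w hw h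
      (ae_restrict_of_forall_mem measurableSet_Ioi fun _ hr => hcont.continuousAt (Ici_mem_nhds hr))
      ⟨B, fun z hz => hB z hz.le⟩
end

section
/- Let μ be a σ-finite measure on (0,∞) satisfying assumption (H) with exponent p ∈ (1,2), with μ((0,1)) > 0 and μ((1,∞)) > 0, and N ≥ 1 an integer. With the quantities α_{−,N}, q_0^{−,N}, α_{+,N}, q_k^{+,N}, p_k^{+,N}, d_{1,N}, q_0^{1,N}, γ_{1,N} defined in the context, let Γ_N^+, ε̂_N, and Ξ be independent random variables where Γ_N^+ takes values in the positive integers with P(Γ_N^+ = k) = p_k^{+,N}, ε̂_N ∈ {0,1} with P(ε̂_N = 1) = α_{+,N}(1 − q_0^{+,N})/γ_{1,N}, and Ξ has the standard exponential distribution. Set T^{N,+} = Γ_N^+ 𝟙{ε̂_N = 1} − Ξ · E[Γ_N^+ 𝟙{ε̂_N = 1}]. Then there exists a constant C₁ (depending only on p and μ) such that for all N ≥ 1, E[|T^{N,+}|^p] ≤ C₁ N^{p−1} / γ_{1,N}. -/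
open MeasureTheory

/-!
On the positive integers, `Γ_N^+ 𝟙{ε̂_N = 1}` is distributed as a mixture of Poisson laws shifted
by one: for `k ≥ 1`,
`P(Γ_N^+ = k, ε̂_N = 1) = (N γ_{1,N})⁻¹ ∫_{r > 1} P(Poisson(N r) = k + 1) μ(dr)`.
A Poisson variable `X` of parameter `x ≥ 1` satisfies `E[X^p] ≤ p^p e² x^p`, as one sees from
`(X / x)^p ≤ p^p exp (X / x)`. Hence the `p`-th moment of `Γ_N^+ 𝟙{ε̂_N = 1}` is at most
`p^p e² N^(p - 1) / γ_{1,N} · ∫_{r > 1} r^p μ(dr)`. Subtracting `Ξ` times its mean multiplies the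
`Lᵖ` norm by at most `1 + ‖Ξ‖_p`, by the Minkowski and Jensen inequalities.
-/

open ProbabilityTheory Set
open scoped ENNReal NNReal Nat

section ExponentialMoments

theorem rpow_le_rpow_self_mul_exp {p y : ℝ} (hp : 0 < p) (hy : 0 ≤ y) :
    y ^ p ≤ p ^ p * Real.exp y := by
  have hle : y / p ≤ Real.exp (y / p) := by linarith [Real.add_one_le_exp (y / p)]
  calc y ^ p = p ^ p * (y / p) ^ p := by
        rw [← Real.mul_rpow hp.le (by positivity), mul_div_cancel₀ y hp.ne']
    _ ≤ p ^ p * Real.exp (y / p) ^ p := by gcongr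
    _ = p ^ p * Real.exp y := by rw [← Real.exp_mul, div_mul_cancel₀ y hp.ne']

theorem lintegral_exp_mul_poissonMeasure (x : ℝ≥0) (t : ℝ) :
    ∫⁻ k : ℕ, ENNReal.ofReal (Real.exp (t * k)) ∂poissonMeasure x =
      ENNReal.ofReal (Real.exp (x * (Real.exp t - 1))) := by
  have hsum : HasSum (fun k : ℕ => Real.exp (t * k) * (Real.exp (-x) * (x : ℝ) ^ k / k !))
      (Real.exp (x * (Real.exp t - 1))) := by
    convert! (NormedSpace.expSeries_div_hasSum_exp (x * Real.exp t)).mul_left (Real.exp (-x))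
      using 1
    · ext k
      rw [mul_pow, ← Real.exp_nat_mul, mul_comm t]
      ring
    · rw [← Real.exp_eq_exp_ℝ, ← Real.exp_add]
      ring_nf
  simp_rw [lintegral_countable', poissonMeasure_singleton,
    ← ENNReal.ofReal_mul (Real.exp_pos _).le]
  rw [← ENNReal.ofReal_tsum_of_nonneg (fun k => by positivity) hsum.summable, hsum.tsum_eq]

theorem mul_exp_inv_sub_one_le_two {x : ℝ} (hx : 1 ≤ x) : x * (Real.exp x⁻¹ - 1) ≤ 2 := by
  have hx0 : 0 < x := by linarith
  have habs : |x⁻¹| = x⁻¹ := abs_of_pos (by positivity)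
  have hexp : Real.exp x⁻¹ - 1 ≤ 2 * |x⁻¹| :=
    (le_abs_self _).trans (Real.abs_exp_sub_one_le (habs.trans_le (inv_le_one_of_one_le₀ hx)))
  calc x * (Real.exp x⁻¹ - 1) ≤ x * (2 * |x⁻¹|) := by gcongr
    _ = 2 := by rw [habs]; field_simp

theorem lintegral_rpow_poissonMeasure_le {p : ℝ} (hp : 0 < p) {x : ℝ≥0} (hx : 1 ≤ x) :
    ∫⁻ k : ℕ, (k : ℝ≥0∞) ^ p ∂poissonMeasure x ≤
      ENNReal.ofReal (p ^ p * Real.exp 2) * (x : ℝ≥0∞) ^ p := by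
  have hx0 : (0 : ℝ) < x := by exact_mod_cast one_pos.trans_le hx
  have hmoment (k : ℕ) : (k : ℝ≥0∞) ^ p ≤
      ENNReal.ofReal (x ^ p * p ^ p) * ENNReal.ofReal (Real.exp ((x : ℝ)⁻¹ * k)) := by
    rw [← ENNReal.ofReal_mul (by positivity), ← ENNReal.ofReal_natCast,
      ENNReal.ofReal_rpow_of_nonneg k.cast_nonneg hp.le]
    refine ENNReal.ofReal_le_ofReal ?_
    calc (k : ℝ) ^ p = x ^ p * ((x : ℝ)⁻¹ * k) ^ p := by
          rw [← Real.mul_rpow hx0.le (by positivity), mul_inv_cancel_left₀ hx0.ne']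
      _ ≤ x ^ p * (p ^ p * Real.exp ((x : ℝ)⁻¹ * k)) := by
          gcongr
          exact rpow_le_rpow_self_mul_exp hp (by positivity)
      _ = x ^ p * p ^ p * Real.exp ((x : ℝ)⁻¹ * k) := by ring
  calc ∫⁻ k : ℕ, (k : ℝ≥0∞) ^ p ∂poissonMeasure x
      ≤ ENNReal.ofReal (x ^ p * p ^ p) *
          ∫⁻ k : ℕ, ENNReal.ofReal (Real.exp ((x : ℝ)⁻¹ * k)) ∂poissonMeasure x := by
        rw [← lintegral_const_mul _ (by fun_prop)]
        exact lintegral_mono hmoment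
    _ ≤ ENNReal.ofReal (x ^ p * p ^ p) * ENNReal.ofReal (Real.exp 2) := by
        rw [lintegral_exp_mul_poissonMeasure]
        gcongr
        exact mul_exp_inv_sub_one_le_two (by exact_mod_cast hx)
    _ = ENNReal.ofReal (p ^ p * Real.exp 2) * (x : ℝ≥0∞) ^ p := by
        rw [← ENNReal.ofReal_coe_nnreal, ENNReal.ofReal_rpow_of_pos hx0,
          ← ENNReal.ofReal_mul (by positivity), ← ENNReal.ofReal_mul (by positivity)]
        ring_nf

theorem tsum_rpow_mul_poissonMeasure_succ_le {p : ℝ} (hp : 0 ≤ p) (x : ℝ≥0) :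
    ∑' k : ℕ, (k : ℝ≥0∞) ^ p * poissonMeasure x {k + 1} ≤
      ∫⁻ k : ℕ, (k : ℝ≥0∞) ^ p ∂poissonMeasure x := by
  rw [lintegral_countable']
  refine le_trans (ENNReal.tsum_le_tsum fun k => ?_) (ENNReal.tsum_comp_le_tsum_of_injective
    Nat.succ_injective fun k : ℕ => (k : ℝ≥0∞) ^ p * poissonMeasure x {k})
  gcongr
  simp

theorem measurable_poissonMeasure_singleton (k : ℕ) :
    Measurable fun x : ℝ≥0 => poissonMeasure x {k} := by
  simp_rw [poissonMeasure_singleton]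
  fun_prop

theorem tsum_rpow_mul_lintegral_poissonMeasure_succ_le {α : Type*} [MeasurableSpace α]
    {ν : Measure α} {f : α → ℝ≥0} (hf : Measurable f) (hf1 : ∀ᵐ a ∂ν, 1 ≤ f a) {p : ℝ}
    (hp : 0 < p) :
    ∑' k : ℕ, (k : ℝ≥0∞) ^ p * ∫⁻ a, poissonMeasure (f a) {k + 1} ∂ν ≤
      ENNReal.ofReal (p ^ p * Real.exp 2) * ∫⁻ a, (f a : ℝ≥0∞) ^ p ∂ν := by
  have hmeas (k : ℕ) : Measurable fun a => poissonMeasure (f a) {k + 1} :=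
    (measurable_poissonMeasure_singleton _).comp hf
  calc ∑' k : ℕ, (k : ℝ≥0∞) ^ p * ∫⁻ a, poissonMeasure (f a) {k + 1} ∂ν
      = ∫⁻ a, ∑' k : ℕ, (k : ℝ≥0∞) ^ p * poissonMeasure (f a) {k + 1} ∂ν := by
        rw [lintegral_tsum fun k => ((hmeas k).const_mul _).aemeasurable]
        simp_rw [lintegral_const_mul _ (hmeas _)]
    _ ≤ ∫⁻ a, ENNReal.ofReal (p ^ p * Real.exp 2) * (f a : ℝ≥0∞) ^ p ∂ν :=
        lintegral_mono_ae <| hf1.mono fun a ha =>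
          (tsum_rpow_mul_poissonMeasure_succ_le hp.le _).trans
            (lintegral_rpow_poissonMeasure_le hp ha)
    _ = ENNReal.ofReal (p ^ p * Real.exp 2) * ∫⁻ a, (f a : ℝ≥0∞) ^ p ∂ν :=
        lintegral_const_mul _ (by fun_prop)

theorem lintegral_enorm_rpow_of_exponential_tail {Ω : Type*} [MeasurableSpace Ω]
    {P : Measure Ω} [IsProbabilityMeasure P] {X : Ω → ℝ} (hX : AEMeasurable X P) {r p : ℝ}
    (hr : 0 < r) (hp : 0 < p)
    (htail : ∀ t : ℝ, 0 ≤ t → P {ω | t < X ω} = ENNReal.ofReal (Real.exp (-(r * t)))) :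
    ∫⁻ ω, ‖X ω‖ₑ ^ p ∂P = ENNReal.ofReal (Real.Gamma (p + 1) / r ^ p) := by
  have hpos : ∀ᵐ ω ∂P, 0 < X ω :=
    (prob_compl_eq_zero_iff₀ (nullMeasurableSet_lt aemeasurable_const hX)).mpr
      (by simpa using htail 0 le_rfl)
  have hint : IntegrableOn (fun t : ℝ => t ^ (p - 1) * Real.exp (-(r * t))) (Ioi 0) := by
    simpa using integrableOn_rpow_mul_exp_neg_mul_rpow (by linarith : -1 < p - 1) one_pos hr
  calc ∫⁻ ω, ‖X ω‖ₑ ^ p ∂P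
      = ∫⁻ ω, ENNReal.ofReal (X ω ^ p) ∂P := by
        refine lintegral_congr_ae ?_
        filter_upwards [hpos] with ω hω
        rw [Real.enorm_eq_ofReal hω.le, ENNReal.ofReal_rpow_of_pos hω]
    _ = ENNReal.ofReal p *
          ∫⁻ t in Ioi 0, ENNReal.ofReal (t ^ (p - 1) * Real.exp (-(r * t))) := by
        rw [lintegral_rpow_eq_lintegral_meas_lt_mul P (hpos.mono fun _ => le_of_lt) hX hp]
        congr 1
        refine setLIntegral_congr_fun measurableSet_Ioi fun t ht => ?_
        rw [htail t (le_of_lt ht), mul_comm, ENNReal.ofReal_mul (Real.rpow_nonneg (le_of_lt ht) _)]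
    _ = ENNReal.ofReal p * ENNReal.ofReal (∫ t in Ioi 0, t ^ (p - 1) * Real.exp (-(r * t))) := by
        rw [ofReal_integral_eq_lintegral_ofReal hint]
        filter_upwards [ae_restrict_mem measurableSet_Ioi] with t ht
        exact mul_nonneg (Real.rpow_nonneg (le_of_lt ht) _) (Real.exp_pos _).le
    _ = ENNReal.ofReal (Real.Gamma (p + 1) / r ^ p) := by
        rw [Real.integral_rpow_mul_exp_neg_mul_Ioi hp hr, ← ENNReal.ofReal_mul hp.le,
          Real.Gamma_add_one hp.ne', Real.div_rpow zero_le_one hr.le, Real.one_rpow]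
        ring_nf

end ExponentialMoments

section Compensation

variable {Ω : Type*} [MeasurableSpace Ω] {P : Measure Ω} [IsProbabilityMeasure P]
  {E : Type*} [NormedAddCommGroup E] [NormedSpace ℝ E]

theorem enorm_integral_le_eLpNorm {W : Ω → E} (hW : AEStronglyMeasurable W P) {p : ℝ≥0∞}
    (hp : 1 ≤ p) : ‖∫ ω, W ω ∂P‖ₑ ≤ eLpNorm W p P :=
  calc ‖∫ ω, W ω ∂P‖ₑ ≤ ∫⁻ ω, ‖W ω‖ₑ ∂P := enorm_integral_le_lintegral_enorm W
    _ = eLpNorm W 1 P := eLpNorm_one_eq_lintegral_enorm.symm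
    _ ≤ eLpNorm W p P := eLpNorm_le_eLpNorm_of_exponent_le hp hW

theorem eLpNorm_sub_smul_integral_le {W : Ω → E} {X : Ω → ℝ} (hW : AEStronglyMeasurable W P)
    (hX : AEStronglyMeasurable X P) {p : ℝ≥0∞} (hp : 1 ≤ p) :
    eLpNorm (fun ω => W ω - X ω • ∫ ω', W ω' ∂P) p P ≤ (1 + eLpNorm X p P) * eLpNorm W p P := by
  set e := ∫ ω', W ω' ∂P
  have hXe : eLpNorm (fun ω => X ω • e) p P ≤ ‖e‖ₑ * eLpNorm X p P :=
    eLpNorm_le_nnreal_smul_eLpNorm_of_ae_le_mul (.of_forall fun ω => by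
      rw [nnnorm_smul, mul_comm]) p
  calc eLpNorm (fun ω => W ω - X ω • e) p P
      ≤ eLpNorm W p P + eLpNorm (fun ω => X ω • e) p P :=
        eLpNorm_sub_le hW (hX.smul_const e) hp
    _ ≤ eLpNorm W p P + eLpNorm W p P * eLpNorm X p P := by
        gcongr
        exact hXe.trans (by gcongr; exact enorm_integral_le_eLpNorm hW hp)
    _ = (1 + eLpNorm X p P) * eLpNorm W p P := by ring

theorem lintegral_enorm_sub_smul_integral_rpow_le {W : Ω → E} {X : Ω → ℝ}
    (hW : AEStronglyMeasurable W P) (hX : AEStronglyMeasurable X P) {p : ℝ} (hp : 1 ≤ p) :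
    ∫⁻ ω, ‖W ω - X ω • ∫ ω', W ω' ∂P‖ₑ ^ p ∂P ≤
      (1 + (∫⁻ ω, ‖X ω‖ₑ ^ p ∂P) ^ (1 / p)) ^ p * ∫⁻ ω, ‖W ω‖ₑ ^ p ∂P := by
  have hp0 : 0 < p := by linarith
  have h := eLpNorm_sub_smul_integral_le hW hX (ENNReal.one_le_ofReal.mpr hp)
  simp only [eLpNorm_eq_lintegral_rpow_enorm_toReal (ENNReal.ofReal_pos.mpr hp0).ne'
    ENNReal.ofReal_ne_top, ENNReal.toReal_ofReal hp0.le] at h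
  rw [one_div, ENNReal.rpow_inv_le_iff hp0, ENNReal.mul_rpow_of_nonneg _ _ hp0.le,
    ENNReal.rpow_inv_rpow hp0.ne'] at h
  simpa only [one_div] using h

theorem integral_norm_sub_smul_integral_rpow_le {W : Ω → E} {X : Ω → ℝ}
    (hW : AEStronglyMeasurable W P) (hX : AEStronglyMeasurable X P) {p A B : ℝ} (hp : 1 ≤ p)
    (hA : 0 ≤ A) (hB : 0 ≤ B) (hWA : ∫⁻ ω, ‖W ω‖ₑ ^ p ∂P ≤ ENNReal.ofReal A)
    (hXB : ∫⁻ ω, ‖X ω‖ₑ ^ p ∂P ≤ ENNReal.ofReal B) :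
    ∫ ω, ‖W ω - X ω • ∫ ω', W ω' ∂P‖ ^ p ∂P ≤ (1 + B ^ (1 / p)) ^ p * A := by
  have hp0 : 0 < p := by linarith
  have hT : AEStronglyMeasurable (fun ω => W ω - X ω • ∫ ω', W ω' ∂P) P :=
    hW.sub (hX.smul_const _)
  rw [integral_eq_lintegral_of_nonneg_ae (.of_forall fun ω => by positivity)
    (hT.norm.aemeasurable.pow_const p).aestronglyMeasurable]
  refine ENNReal.toReal_le_of_le_ofReal (by positivity) ?_
  simp_rw [← ENNReal.ofReal_rpow_of_nonneg (norm_nonneg _) hp0.le, ofReal_norm]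
  refine (lintegral_enorm_sub_smul_integral_rpow_le hW hX hp).trans ?_
  rw [ENNReal.ofReal_mul (by positivity), ← ENNReal.ofReal_rpow_of_nonneg (by positivity) hp0.le,
    ENNReal.ofReal_add zero_le_one (by positivity), ENNReal.ofReal_one,
    ← ENNReal.ofReal_rpow_of_nonneg hB (by positivity)]
  gcongr

end Compensation

theorem lintegral_enorm_indicator_rpow_of_indepFun {Ω β E : Type*} [MeasurableSpace Ω]
    [MeasurableSpace β] [NormedAddCommGroup E] [MeasurableSpace E] [OpensMeasurableSpace E]
    {P : Measure Ω} {X : Ω → E} {Y : Ω → β} (hX : Measurable X) (hY : Measurable Y)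
    (hind : IndepFun X Y P) {s : Set β} (hs : MeasurableSet s) {p : ℝ} (hp : 0 < p) :
    ∫⁻ ω, ‖(Y ⁻¹' s).indicator X ω‖ₑ ^ p ∂P = (∫⁻ ω, ‖X ω‖ₑ ^ p ∂P) * P (Y ⁻¹' s) := by
  have hpow : Measurable fun x : E => ‖x‖ₑ ^ p := by fun_prop
  have hone : Measurable (s.indicator (1 : β → ℝ≥0∞)) := measurable_one.indicator hs
  calc ∫⁻ ω, ‖(Y ⁻¹' s).indicator X ω‖ₑ ^ p ∂P
      = ∫⁻ ω, ‖X ω‖ₑ ^ p * s.indicator 1 (Y ω) ∂P := by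
        refine lintegral_congr fun ω => ?_
        by_cases hω : Y ω ∈ s <;> simp [hω, hp]
    _ = (∫⁻ ω, ‖X ω‖ₑ ^ p ∂P) * ∫⁻ ω, s.indicator 1 (Y ω) ∂P :=
        lintegral_mul_eq_lintegral_mul_lintegral_of_indepFun (hpow.comp hX) (hone.comp hY)
          (hind.comp hpow hone)
    _ = (∫⁻ ω, ‖X ω‖ₑ ^ p ∂P) * P (Y ⁻¹' s) := by
        rw [← lintegral_indicator_one (hY hs)]
        rfl

section LargeJumps

/-- The rate `α_{+,N}` of branching events caused by jumps larger than `1`; the scale `N` may be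
any real number. -/
noncomputable def largeJumpRate (μ : Measure ℝ) (N : ℝ) : ℝ :=
  ∫ r in Ioi 1, r * (1 - Real.exp (-N * r)) ∂μ

/-- The weights `q_k^{+,N}` of the offspring law at a branching event caused by a jump larger
than `1`. -/
noncomputable def largeJumpOffspringWeight (μ : Measure ℝ) (N : ℝ) : ℕ → ℝ
  | 0 => 1 / (N * largeJumpRate μ N) * ∫ r in Ioi 1, (Real.exp (-N * r) - 1 + N * r) ∂μ
  | 1 => 0
  | k + 2 => 1 / ((k + 2)! * N * largeJumpRate μ N) *
      ∫ r in Ioi 1, (N * r) ^ (k + 2) * Real.exp (-N * r) ∂μ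

/-- The weights `p_k^{+,N}` of the law of `Γ_N^+`, the number of additional particles at a
non-lethal branching event caused by a jump larger than `1`. -/
noncomputable def largeJumpSurplusWeight (μ : Measure ℝ) (N : ℝ) (k : ℕ) : ℝ :=
  largeJumpOffspringWeight μ N (k + 1) / (1 - largeJumpOffspringWeight μ N 0)

variable {μ : Measure ℝ} {N p : ℝ}

theorem ofReal_largeJumpSurplusWeight_le (hN : 0 ≤ N) (hα : 0 < largeJumpRate μ N)
    (hq : largeJumpOffspringWeight μ N 0 < 1) {k : ℕ} (hk : 1 ≤ k) :
    ENNReal.ofReal (largeJumpSurplusWeight μ N k) ≤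
      ENNReal.ofReal (1 / (N * (largeJumpRate μ N * (1 - largeJumpOffspringWeight μ N 0)))) *
        ∫⁻ r in Ioi 1, poissonMeasure (N * r).toNNReal {k + 1} ∂μ := by
  obtain ⟨j, rfl⟩ := Nat.exists_eq_add_of_le' hk
  have hq' : 0 < 1 - largeJumpOffspringWeight μ N 0 := by linarith
  have hsurplus : largeJumpSurplusWeight μ N (j + 1) =
      1 / (N * (largeJumpRate μ N * (1 - largeJumpOffspringWeight μ N 0))) *
        ∫ r in Ioi 1, Real.exp (-(N * r)) * (N * r) ^ (j + 2) / (j + 2)! ∂μ := by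
    simp only [largeJumpSurplusWeight, largeJumpOffspringWeight, integral_div, neg_mul,
      mul_comm (Real.exp _)]
    field_simp
  rw [hsurplus, ENNReal.ofReal_mul (by positivity)]
  gcongr
  rw [integral_eq_lintegral_of_nonneg_ae _ (Measurable.aestronglyMeasurable (by fun_prop))]
  · refine ENNReal.ofReal_toReal_le.trans_eq (setLIntegral_congr_fun measurableSet_Ioi ?_)
    intro r hr
    have hr0 : 0 ≤ r := zero_le_one.trans (le_of_lt hr)
    simp only [poissonMeasure_singleton]
    rw [Real.coe_toNNReal _ (mul_nonneg hN hr0)]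
  · filter_upwards [ae_restrict_mem measurableSet_Ioi] with r hr
    have hr0 : 0 ≤ r := zero_le_one.trans (le_of_lt hr)
    positivity

theorem setLIntegral_Ioi_one_mul_rpow (hN : 0 < N)
    (hμ : IntegrableOn (fun r : ℝ => r ^ p) (Ioi 1) μ) :
    ∫⁻ r in Ioi 1, ((N * r).toNNReal : ℝ≥0∞) ^ p ∂μ =
      ENNReal.ofReal (N ^ p * ∫ r in Ioi 1, r ^ p ∂μ) := by
  rw [← integral_const_mul, ofReal_integral_eq_lintegral_ofReal (hμ.const_mul _)]
  · refine setLIntegral_congr_fun measurableSet_Ioi fun r hr => ?_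
    have hr0 : 0 < r := zero_lt_one.trans hr
    rw [← ENNReal.ofReal, ← Real.mul_rpow hN.le hr0.le, ENNReal.ofReal_rpow_of_pos (by positivity)]
  · filter_upwards [ae_restrict_mem measurableSet_Ioi] with r hr
    have hr0 : 0 < r := zero_lt_one.trans hr
    positivity

variable {Ω : Type*} [MeasurableSpace Ω] {P : Measure Ω} {Γ ε : Ω → ℕ}

theorem lintegral_rpow_largeJumpSurplus_le (hN : 1 ≤ N) (hp : 0 < p)
    (hμ : IntegrableOn (fun r : ℝ => r ^ p) (Ioi 1) μ) (hα : 0 < largeJumpRate μ N)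
    (hq : largeJumpOffspringWeight μ N 0 < 1) (hΓ : Measurable Γ)
    (hlaw : ∀ k, 1 ≤ k → P {ω | Γ ω = k} = ENNReal.ofReal (largeJumpSurplusWeight μ N k)) :
    ∫⁻ ω, (Γ ω : ℝ≥0∞) ^ p ∂P ≤
      ENNReal.ofReal (p ^ p * Real.exp 2 * (∫ r in Ioi 1, r ^ p ∂μ) * N ^ (p - 1) /
        (largeJumpRate μ N * (1 - largeJumpOffspringWeight μ N 0))) := by
  have hN0 : 0 < N := by linarith
  have hq' : 0 < 1 - largeJumpOffspringWeight μ N 0 := by linarith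
  set c := largeJumpRate μ N * (1 - largeJumpOffspringWeight μ N 0)
  have hNr : ∀ᵐ r ∂μ.restrict (Ioi 1), 1 ≤ (N * r).toNNReal := by
    filter_upwards [ae_restrict_mem measurableSet_Ioi] with r hr
    exact Real.one_le_toNNReal.mpr (one_le_mul_of_one_le_of_one_le hN (le_of_lt hr))
  have hterm (k : ℕ) : (k : ℝ≥0∞) ^ p * P.map Γ {k} ≤ ENNReal.ofReal (1 / (N * c)) *
      ((k : ℝ≥0∞) ^ p * ∫⁻ r in Ioi 1, poissonMeasure (N * r).toNNReal {k + 1} ∂μ) := by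
    rcases Nat.eq_zero_or_pos k with rfl | hk
    · simp [hp]
    rw [mul_left_comm, Measure.map_apply hΓ (measurableSet_singleton k)]
    gcongr
    exact (hlaw k hk).trans_le (ofReal_largeJumpSurplusWeight_le hN0.le hα hq hk)
  calc ∫⁻ ω, (Γ ω : ℝ≥0∞) ^ p ∂P
      = ∑' k : ℕ, (k : ℝ≥0∞) ^ p * P.map Γ {k} := by
        rw [← lintegral_countable', lintegral_map (by fun_prop) hΓ]
    _ ≤ ENNReal.ofReal (1 / (N * c)) *
          (ENNReal.ofReal (p ^ p * Real.exp 2) *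
            ENNReal.ofReal (N ^ p * ∫ r in Ioi 1, r ^ p ∂μ)) := by
        refine (ENNReal.tsum_le_tsum hterm).trans ?_
        rw [ENNReal.tsum_mul_left, ← setLIntegral_Ioi_one_mul_rpow hN0 hμ]
        gcongr
        exact tsum_rpow_mul_lintegral_poissonMeasure_succ_le (by fun_prop) hNr hp
    _ = ENNReal.ofReal
          (p ^ p * Real.exp 2 * (∫ r in Ioi 1, r ^ p ∂μ) * N ^ (p - 1) / c) := by
        rw [← ENNReal.ofReal_mul (by positivity), ← ENNReal.ofReal_mul (by positivity),
          Real.rpow_sub_one hN0.ne']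
        congr 1
        field_simp

theorem lintegral_enorm_thinned_largeJumpSurplus_rpow_le (hN : 1 ≤ N) (hp : 0 < p)
    (hμ : IntegrableOn (fun r : ℝ => r ^ p) (Ioi 1) μ) (hα : 0 < largeJumpRate μ N)
    (hq : largeJumpOffspringWeight μ N 0 < 1) {γ : ℝ} (hγ : 0 < γ)
    (hΓ : Measurable Γ) (hε : Measurable ε)
    (hΓlaw : ∀ k, 1 ≤ k → P {ω | Γ ω = k} = ENNReal.ofReal (largeJumpSurplusWeight μ N k))
    (hεlaw : P {ω | ε ω = 1} =
      ENNReal.ofReal (largeJumpRate μ N * (1 - largeJumpOffspringWeight μ N 0) / γ))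
    (hind : IndepFun Γ ε P) :
    ∫⁻ ω, ‖if ε ω = 1 then (Γ ω : ℝ) else 0‖ₑ ^ p ∂P ≤
      ENNReal.ofReal (p ^ p * Real.exp 2 * (∫ r in Ioi 1, r ^ p ∂μ) * N ^ (p - 1) / γ) := by
  have hq' : 0 < 1 - largeJumpOffspringWeight μ N 0 := by linarith
  have hcast : Measurable (Nat.cast : ℕ → ℝ) := by fun_prop
  have hthin := lintegral_enorm_indicator_rpow_of_indepFun (hcast.comp hΓ) hε
    (hind.comp hcast measurable_id) (measurableSet_singleton 1) hp
  have hite (ω : Ω) : (if ε ω = 1 then (Γ ω : ℝ) else 0) =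
      (ε ⁻¹' {1}).indicator (Nat.cast ∘ Γ) ω := by
    by_cases hω : ε ω = 1 <;> simp [hω]
  simp_rw [hite, hthin, Function.comp_apply, Real.enorm_natCast]
  refine (mul_le_mul' (lintegral_rpow_largeJumpSurplus_le hN hp hμ hα hq hΓ hΓlaw)
    hεlaw.le).trans_eq ?_
  rw [← ENNReal.ofReal_mul' (by positivity)]
  congr 1
  field_simp

end LargeJumps

theorem setIntegral_Ioi_one_rpow_pos {μ : Measure ℝ} {p : ℝ}
    (hint : IntegrableOn (fun r : ℝ => r ^ p) (Ioi 1) μ) (hμ : μ (Ioi 1) ≠ 0) :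
    0 < ∫ r in Ioi 1, r ^ p ∂μ := by
  have hpos : ∀ r ∈ Ioi (1 : ℝ), 0 < r ^ p := fun r hr =>
    Real.rpow_pos_of_pos (zero_lt_one.trans hr) p
  have hsupp : Ioi (1 : ℝ) ⊆ Function.support fun r => r ^ p := fun r hr => (hpos r hr).ne'
  rw [setIntegral_pos_iff_support_of_nonneg_ae _ hint, inter_eq_right.mpr hsupp]
  · exact pos_iff_ne_zero.mpr hμ
  · filter_upwards [ae_restrict_mem measurableSet_Ioi] with r hr using (hpos r hr).le

theorem integrableOn_rpow_Ioi_one_of_max {μ : Measure ℝ} {p : ℝ}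
    (h : IntegrableOn (fun r => max r (r ^ p)) (Ioi 0) μ) :
    IntegrableOn (fun r : ℝ => r ^ p) (Ioi 1) μ := by
  refine (h.mono_set (Ioi_subset_Ioi zero_le_one)).mono'
    (Measurable.aestronglyMeasurable (by fun_prop)) ?_
  filter_upwards [ae_restrict_mem measurableSet_Ioi] with r hr
  rw [Real.norm_of_nonneg (Real.rpow_nonneg (zero_le_one.trans (le_of_lt hr)) p)]
  exact le_max_right _ _

theorem stmt17_general {μ : Measure ℝ} {p : ℝ} (hp : 1 ≤ p)
    (hμ : IntegrableOn (fun r : ℝ => r ^ p) (Ioi 1) μ) {N : ℝ} (hN : 1 ≤ N)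
    (hα : 0 < largeJumpRate μ N) (hq : largeJumpOffspringWeight μ N 0 < 1) {γ : ℝ} (hγ : 0 < γ)
    {Ω : Type*} [MeasurableSpace Ω] {P : Measure Ω} [IsProbabilityMeasure P]
    {Γ ε : Ω → ℕ} {Ξ : Ω → ℝ} (hΓ : Measurable Γ) (hε : Measurable ε) (hΞ : Measurable Ξ)
    (hΓlaw : ∀ k, 1 ≤ k → P {ω | Γ ω = k} = ENNReal.ofReal (largeJumpSurplusWeight μ N k))
    (hεlaw : P {ω | ε ω = 1} =
      ENNReal.ofReal (largeJumpRate μ N * (1 - largeJumpOffspringWeight μ N 0) / γ))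
    (hΞlaw : ∀ t : ℝ, 0 ≤ t → P {ω | t < Ξ ω} = ENNReal.ofReal (Real.exp (-t)))
    (hind : IndepFun Γ ε P) :
    ∫ ω, |(if ε ω = 1 then (Γ ω : ℝ) else 0) -
        Ξ ω * ∫ ω', (if ε ω' = 1 then (Γ ω' : ℝ) else 0) ∂P| ^ p ∂P ≤
      (1 + Real.Gamma (p + 1) ^ (1 / p)) ^ p *
        (p ^ p * Real.exp 2 * ∫ r in Ioi 1, r ^ p ∂μ) * N ^ (p - 1) / γ := by
  have hp0 : 0 < p := by linarith
  have hG : 0 < Real.Gamma (p + 1) := Real.Gamma_pos_of_pos (by linarith)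
  have hM : 0 ≤ ∫ r in Ioi 1, r ^ p ∂μ := setIntegral_nonneg measurableSet_Ioi fun r hr =>
    Real.rpow_nonneg (zero_le_one.trans (le_of_lt hr)) p
  have hW : Measurable fun ω => if ε ω = 1 then (Γ ω : ℝ) else 0 :=
    Measurable.ite (hε (measurableSet_singleton 1)) (by fun_prop) measurable_const
  have hWmoment := lintegral_enorm_thinned_largeJumpSurplus_rpow_le
    hN hp0 hμ hα hq hγ hΓ hε hΓlaw hεlaw hind
  have hΞmoment : ∫⁻ ω, ‖Ξ ω‖ₑ ^ p ∂P = ENNReal.ofReal (Real.Gamma (p + 1)) := by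
    simpa using lintegral_enorm_rpow_of_exponential_tail hΞ.aemeasurable one_pos hp0
      (by simpa using hΞlaw)
  refine (integral_norm_sub_smul_integral_rpow_le hW.aestronglyMeasurable hΞ.aestronglyMeasurable hp
    (by positivity) hG.le hWmoment hΞmoment.le).trans_eq ?_
  ring

/-- `p`-th moment bound `E[|T^{N,+}|^p] ≤ C₁ N^{p-1} / γ_{1,N}` for
`T^{N,+} = Γ_N^+ 𝟙{ε̂_N = 1} - Ξ E[Γ_N^+ 𝟙{ε̂_N = 1}]`, where `Γ_N^+`, `ε̂_N`, `Ξ` are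
independent, `Γ_N^+` has law `p^{+,N}` on the positive integers,
`P(ε̂_N = 1) = α_{+,N}(1 - q_0^{+,N})/γ_{1,N}`, and `Ξ` is standard exponential;
the constant `C₁` depends only on `p` and `μ`. -/
theorem stmt17 (μ : Measure ℝ) [SigmaFinite μ]
    (p : ℝ) (hp1 : 1 < p) (hp2 : p < 2)
    (hH : Integrable (fun r => max r (r ^ p)) (μ.restrict (Set.Ioi 0)))
    (hμ01 : μ (Set.Ioc 0 1) ≠ 0) (hμ1 : μ (Set.Ioi 1) ≠ 0) :
    ∃ C₁ : ℝ, 0 < C₁ ∧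
      ∀ N : ℕ, 1 ≤ N →
      ∀ (Lval αm αp d1N q0p q01 γ1N : ℝ) (qp pp : ℕ → ℝ),
        Lval = (∫ r in Set.Ioi (0:ℝ), (Real.exp (-(N:ℝ) * r) - 1 + N * r) ∂μ) →
        αm = (∫ r in Set.Ioc (0:ℝ) 1, r * (1 - Real.exp (-(N:ℝ) * r)) ∂μ) →
        αp = (∫ r in Set.Ioi (1:ℝ), r * (1 - Real.exp (-(N:ℝ) * r)) ∂μ) →
        0 < αm → 0 < αp →
        d1N = αm + αp →
        q0p = (1 / ((N:ℝ) * αp)) *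
          ∫ r in Set.Ioi (1:ℝ), (Real.exp (-(N:ℝ) * r) - 1 + N * r) ∂μ →
        q0p < 1 →
        q01 = Lval / ((N:ℝ) * d1N) →
        γ1N = d1N * (1 - q01) → 0 < γ1N →
        qp 0 = q0p → qp 1 = 0 →
        (∀ k : ℕ, 2 ≤ k → qp k = (1 / ((Nat.factorial k : ℝ) * N * αp)) *
          ∫ r in Set.Ioi (1:ℝ), ((N:ℝ) * r) ^ k * Real.exp (-(N:ℝ) * r) ∂μ) →
        (∀ k : ℕ, 1 ≤ k → pp k = qp (k + 1) / (1 - q0p)) →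
        ∀ (Ω : Type) [MeasurableSpace Ω] (P : Measure Ω) [IsProbabilityMeasure P]
          (Γ : Ω → ℕ) (eps : Ω → ℕ) (Xi : Ω → ℝ),
          Measurable Γ → Measurable eps → Measurable Xi →
          (∀ ω, 1 ≤ Γ ω) →
          (∀ k : ℕ, 1 ≤ k → P {ω | Γ ω = k} = ENNReal.ofReal (pp k)) →
          (∀ ω, eps ω ≤ 1) →
          P {ω | eps ω = 1} = ENNReal.ofReal (αp * (1 - q0p) / γ1N) →
          (∀ t : ℝ, 0 ≤ t → P {ω | t < Xi ω} = ENNReal.ofReal (Real.exp (-t))) →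
          (∀ (A B : Set ℕ) (S : Set ℝ), MeasurableSet S →
            P (Γ ⁻¹' A ∩ eps ⁻¹' B ∩ Xi ⁻¹' S) =
              P (Γ ⁻¹' A) * P (eps ⁻¹' B) * P (Xi ⁻¹' S)) →
          (∫ ω, |(if eps ω = 1 then (Γ ω : ℝ) else 0) -
              Xi ω * ∫ ω', (if eps ω' = 1 then (Γ ω' : ℝ) else 0) ∂P| ^ p ∂P)
            ≤ C₁ * (N:ℝ) ^ (p - 1) / γ1N := by
  have hint : IntegrableOn (fun r : ℝ => r ^ p) (Ioi 1) μ := integrableOn_rpow_Ioi_one_of_max hH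
  have hM := setIntegral_Ioi_one_rpow_pos hint hμ1
  have hG : 0 < Real.Gamma (p + 1) := Real.Gamma_pos_of_pos (by linarith)
  refine ⟨(1 + Real.Gamma (p + 1) ^ (1 / p)) ^ p *
    (p ^ p * Real.exp 2 * ∫ r in Ioi 1, r ^ p ∂μ), by positivity, ?_⟩
  intro N hN _ _ αp _ q0p _ γ qp pp _ _ hαp _ hα _ hq0p hq _ _ hγ _ _ hqp hpp
    Ω _ P _ Γ ε Ξ hΓ hε hΞ _ hΓlaw _ hεlaw hΞlaw hind
  subst hαp hq0p
  have hsurplus (k : ℕ) (hk : 1 ≤ k) : pp k = largeJumpSurplusWeight μ N k := by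
    obtain ⟨j, rfl⟩ := Nat.exists_eq_add_of_le' hk
    rw [hpp _ hk, hqp _ (by omega)]
    rfl
  exact stmt17_general hp1.le hint (by exact_mod_cast hN) hα hq hγ hΓ hε hΞ
    (fun k hk => (hΓlaw k hk).trans (by rw [hsurplus k hk])) hεlaw hΞlaw
    (indepFun_iff_measure_inter_preimage_eq_mul.mpr fun A B _ _ => by
      simpa using hind A B univ MeasurableSet.univ)
end

section
/- Let (Ω, F, P) be a probability space with a filtration (G_s)_{s≥0}, and let N_1, …, N_k be stochastic processes such that each N_i is adapted, ℕ-valued, nondecreasing, right-continuous with left limits, N_i(0) = 0, all jumps of each N_i are of size 1, and no two of the processes jump at the same time (equivalently, s ↦ ∑_{i=1}^k N_i(s) also has all jumps of size 1). Suppose there are constants C_1, …, C_k ≥ 0 such that for each i the process M_i(s) = N_i(s) − C_i s is a (G_s)-martingale. Then for all 0 ≤ r < s and all α_1, …, α_k ≥ 0, E[ exp(−∑_{i=1}^k α_i (N_i(s) − N_i(r))) | G_r ] = ∏_{i=1}^k exp(−C_i (s − r)(1 − e^{−α_i})) almost surely; consequently N_1, …, N_k are mutually independent Poisson processes with respective intensities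 C_1, …, C_k. -/
open MeasureTheory ProbabilityTheory

/-- A nondecreasing `ℕ`-valued function of time has all jumps of size (at most) one:
at every positive time `s`, its value exceeds its left limit `⨆_{t < s} f t` by at
most `1`. (For a counting process, a jump, when it occurs, then has size exactly 1.) -/
def UnitJumps (f : NNReal → ℕ) : Prop :=
  ∀ s : NNReal, 0 < s → f s ≤ (⨆ t : {t : NNReal // t < s}, f t.1) + 1

open Filter Topology

/-! For a vector of counts `d` of total at most one, `exp (-∑ αᵢ dᵢ)` equals the affine function
`1 - ∑ (1 - exp (-αᵢ)) dᵢ`. Since the processes never jump together, on a fine enough partition of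
`[r, s]` every increment of a given path is such a vector. The martingale property turns the linear
term into its compensator, so along the partition the expected weight (on an event of `𝓕 r`)
satisfies `a (j + 1) = (1 - Δl) a j` up to an error, and in the limit it is multiplied by
`exp (-(l s - l r))`. The total error of a path lies between `0` and
`∑ (1 - exp (-αᵢ)) (Nᵢ s - Nᵢ r)`, whatever the partition, so its expectation tends to `0` by
dominated convergence. -/

section CountingPath

lemma UnitJumps.exists_lt_le_add_one {f : NNReal → ℕ} (hf : UnitJumps f) (hmono : Monotone f)
    {s : NNReal} (hs : 0 < s) : ∃ t < s, f s ≤ f t + 1 := by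
  have : Nonempty {t : NNReal // t < s} := ⟨⟨0, hs⟩⟩
  have hbdd : BddAbove (Set.range fun t : {t : NNReal // t < s} => f t.1) :=
    ⟨f s, by rintro _ ⟨t, rfl⟩; exact hmono t.2.le⟩
  obtain ⟨⟨t, ht⟩, hsup⟩ := Nat.sSup_mem (Set.range_nonempty _) hbdd
  exact ⟨t, ht, (hf s hs).trans_eq (congrArg (· + 1) hsup.symm)⟩

lemma continuousWithinAt_Ici_of_forall_exists_eq {X : Type*} [TopologicalSpace X]
    {f : NNReal → X} {s : NNReal} (h : ∃ δ, 0 < δ ∧ ∀ t, s ≤ t → t < s + δ → f t = f s) :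
    ContinuousWithinAt f (Set.Ici s) s := by
  obtain ⟨δ, hδ, hconst⟩ := h
  refine tendsto_const_nhds.congr' ?_
  filter_upwards [self_mem_nhdsWithin,
    mem_nhdsWithin_of_mem_nhds (gt_mem_nhds (lt_add_of_pos_right s hδ))] with t hst hts
  exact (hconst t hst hts).symm

variable {ι : Type*} [Fintype ι]

/-- The paths of a multivariate counting process: nondecreasing, right-continuous, and with all
jumps of the total count of size one, so that distinct components never jump together. -/
structure IsCountingPath (f : NNReal → ι → ℕ) : Prop where
  monotone : Monotone f
  rightContinuous : ∀ s, ContinuousWithinAt f (Set.Ici s) s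
  unitJumps : UnitJumps fun s => ∑ i, f s i

namespace IsCountingPath

variable {f : NNReal → ι → ℕ}

lemma of_components (hmono : ∀ i, Monotone (f · i))
    (hrc : ∀ i s, ∃ δ, 0 < δ ∧ ∀ t, s ≤ t → t < s + δ → f t i = f s i)
    (hunit : UnitJumps fun s => ∑ i, f s i) : IsCountingPath f where
  monotone _ _ hst i := hmono i hst
  rightContinuous s := continuousWithinAt_pi.2 fun i =>
    continuousWithinAt_Ici_of_forall_exists_eq (hrc i s)
  unitJumps := hunit

lemma monotone_sum (hf : IsCountingPath f) : Monotone fun s => ∑ i, f s i :=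
  fun _ _ hst => Finset.sum_le_sum fun i _ => hf.monotone hst i

lemma eventually_sum_le (hf : IsCountingPath f) (s : NNReal) :
    ∀ᶠ t in 𝓝 s, ∑ i, f t i ≤ ∑ i, f s i := by
  have hright : ∀ᶠ t in 𝓝[≥] s, f t = f s := by
    have := hf.rightContinuous s
    rwa [ContinuousWithinAt, nhds_discrete, tendsto_pure] at this
  filter_upwards [eventually_nhdsWithin_iff.1 hright] with t ht
  rcases le_total s t with hst | hts
  · rw [ht hst]
  · exact hf.monotone_sum hts

lemma eventually_sum_le_add_one (hf : IsCountingPath f) (s : NNReal) :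
    ∀ᶠ t in 𝓝 s, ∑ i, f s i ≤ ∑ i, f t i + 1 := by
  rcases eq_or_ne s 0 with rfl | hs
  · exact Eventually.of_forall fun t => (hf.monotone_sum zero_le).trans (Nat.le_succ _)
  · obtain ⟨u, hus, hu⟩ := hf.unitJumps.exists_lt_le_add_one hf.monotone_sum (pos_iff_ne_zero.2 hs)
    filter_upwards [lt_mem_nhds hus] with t hut
    exact hu.trans (Nat.add_le_add_right (hf.monotone_sum hut.le) 1)

lemma exists_forall_dist_lt_sum_le_add_one (hf : IsCountingPath f) {K : Set NNReal}
    (hK : IsCompact K) :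
    ∃ δ > 0, ∀ x ∈ K, ∀ y, dist y x < δ → ∑ i, f y i ≤ ∑ i, f x i + 1 := by
  let U : NNReal → Set NNReal := fun s =>
    {t | ∑ i, f t i ≤ ∑ i, f s i ∧ ∑ i, f s i ≤ ∑ i, f t i + 1}
  have hU : ∀ s, U s ∈ 𝓝 s := fun s => (hf.eventually_sum_le s).and (hf.eventually_sum_le_add_one s)
  obtain ⟨δ, hδ, hball⟩ := lebesgue_number_lemma_of_metric hK (fun s => isOpen_interior (s := U s))
    fun s _ => Set.mem_iUnion.2 ⟨s, mem_interior_iff_mem_nhds.2 (hU s)⟩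
  refine ⟨δ, hδ, fun x hx y hyx => ?_⟩
  obtain ⟨s, hs⟩ := hball x hx
  exact (interior_subset (hs hyx)).1.trans (interior_subset (hs (Metric.mem_ball_self hδ))).2

end IsCountingPath

end CountingPath

section UniformNode

/-- The `j`-th node of the partition of `[r, s]` into `n` intervals of equal length. For `s < r`
the truncated difference makes all nodes equal to `r`. -/
noncomputable def uniformNode (r s : NNReal) (n j : ℕ) : NNReal := r + j * ((s - r) / n)

variable {r s : NNReal}

lemma uniformNode_zero (r s : NNReal) (n : ℕ) : uniformNode r s n 0 = r := by
  simp [uniformNode]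

lemma uniformNode_self (hrs : r ≤ s) {n : ℕ} (hn : n ≠ 0) : uniformNode r s n n = s := by
  rw [uniformNode, mul_div_cancel₀ _ (Nat.cast_ne_zero.2 hn), add_tsub_cancel_of_le hrs]

lemma monotone_uniformNode (r s : NNReal) (n : ℕ) : Monotone (uniformNode r s n) := by
  intro i j hij
  unfold uniformNode
  gcongr

lemma uniformNode_mem_Icc (hrs : r ≤ s) {n j : ℕ} (hj : j ≤ n) :
    uniformNode r s n j ∈ Set.Icc r s := by
  refine ⟨le_self_add, ?_⟩
  rcases eq_or_ne n 0 with rfl | hn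
  · rwa [Nat.le_zero.1 hj, uniformNode_zero]
  · exact (monotone_uniformNode r s n hj).trans_eq (uniformNode_self hrs hn)

lemma eventually_dist_uniformNode_lt (r s : NNReal) {δ : ℝ} (hδ : 0 < δ) :
    ∀ᶠ n in atTop, ∀ j, dist (uniformNode r s n (j + 1)) (uniformNode r s n j) < δ := by
  filter_upwards [(tendsto_const_div_atTop_nhds_zero_nat ((s - r : NNReal) : ℝ)).eventually_lt_const
    hδ] with n hn j
  have hstep : uniformNode r s n (j + 1) = uniformNode r s n j + (s - r) / n := by
    simp only [uniformNode, Nat.cast_succ]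
    ring
  rw [hstep, NNReal.dist_eq, NNReal.coe_add, add_sub_cancel_left, NNReal.abs_eq]
  exact_mod_cast hn

lemma tendsto_sum_sq_sub_uniformNode {g : NNReal → ℝ} (hmono : Monotone g) (hcont : Continuous g)
    (hrs : r ≤ s) :
    Tendsto (fun n => ∑ j ∈ Finset.range n,
      (g (uniformNode r s n (j + 1)) - g (uniformNode r s n j)) ^ 2) atTop (𝓝 0) := by
  have hV : 0 ≤ g s - g r := sub_nonneg.2 (hmono hrs)
  refine Metric.tendsto_nhds.2 fun ε hε => ?_
  obtain ⟨δ, hδ, hg⟩ := Metric.uniformContinuousOn_iff.1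
    (isCompact_Icc.uniformContinuousOn_of_continuous hcont.continuousOn (s := Set.Icc r s))
    (ε / (g s - g r + 1)) (by positivity)
  filter_upwards [eventually_dist_uniformNode_lt r s hδ, eventually_ne_atTop 0] with n hn hn0
  have hinc : ∀ j, 0 ≤ g (uniformNode r s n (j + 1)) - g (uniformNode r s n j) := fun j =>
    sub_nonneg.2 (hmono (monotone_uniformNode r s n j.le_succ))
  have hsmall : ∀ j < n, g (uniformNode r s n (j + 1)) - g (uniformNode r s n j) ≤
      ε / (g s - g r + 1) := fun j hj =>
    (le_abs_self _).trans (hg _ (uniformNode_mem_Icc hrs hj) _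
      (uniformNode_mem_Icc hrs hj.le) (hn j)).le
  rw [Real.dist_0_eq_abs, abs_of_nonneg (Finset.sum_nonneg fun j _ => sq_nonneg _)]
  calc ∑ j ∈ Finset.range n, (g (uniformNode r s n (j + 1)) - g (uniformNode r s n j)) ^ 2
      ≤ ∑ j ∈ Finset.range n, ε / (g s - g r + 1) *
          (g (uniformNode r s n (j + 1)) - g (uniformNode r s n j)) := by
        refine Finset.sum_le_sum fun j hj => ?_
        rw [sq]
        exact mul_le_mul_of_nonneg_right (hsmall j (Finset.mem_range.1 hj)) (hinc j)
    _ = ε / (g s - g r + 1) * (g s - g r) := by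
        rw [← Finset.mul_sum, Finset.sum_range_sub fun j => g (uniformNode r s n j),
          uniformNode_self hrs hn0, uniformNode_zero]
    _ < ε := by
        rw [div_mul_eq_mul_div, div_lt_iff₀ (by positivity)]
        linarith

end UniformNode

section LaplaceWeight

variable {ι : Type*} [Fintype ι] {α : ι → ℝ}

/-- The exponential weight `exp (-⟨α, d⟩)` of a vector of counts `d`, whose expectation is the
Laplace transform of the counts at `α`. -/
noncomputable def laplaceWeight (α : ι → ℝ) (d : ι → ℕ) : ℝ := Real.exp (-∑ i, α i * d i)

/-- The Laplace exponent at `α` of independent Poisson variables with means `x`, that is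
`E[exp (-⟨α, X⟩)] = exp (-laplaceExponent α x)`. -/
noncomputable def laplaceExponent (α x : ι → ℝ) : ℝ := ∑ i, (1 - Real.exp (-α i)) * x i

/-- The error made in replacing `laplaceWeight α d` by its interpolation at the vectors `d` of
total count at most one, which is affine in `d`. -/
noncomputable def laplaceError (α : ι → ℝ) (d : ι → ℕ) : ℝ :=
  laplaceWeight α d - (1 - laplaceExponent α fun i => d i)

lemma laplaceWeight_pos (α : ι → ℝ) (d : ι → ℕ) : 0 < laplaceWeight α d := Real.exp_pos _

lemma laplaceWeight_zero (α : ι → ℝ) : laplaceWeight α 0 = 1 := by simp [laplaceWeight]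

lemma laplaceWeight_add (α : ι → ℝ) (d e : ι → ℕ) :
    laplaceWeight α (d + e) = laplaceWeight α d * laplaceWeight α e := by
  simp only [laplaceWeight, ← Real.exp_add, Pi.add_apply, Nat.cast_add, mul_add,
    Finset.sum_add_distrib, neg_add]

lemma laplaceWeight_le_one (hα : 0 ≤ α) (d : ι → ℕ) : laplaceWeight α d ≤ 1 :=
  Real.exp_le_one_iff.2 <| neg_nonpos.2 <|
    Finset.sum_nonneg fun i _ => mul_nonneg (hα i) (Nat.cast_nonneg _)

lemma abs_mul_laplaceWeight_le (hα : 0 ≤ α) {z c : ℝ} (hz : |z| ≤ c) (d : ι → ℕ) :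
    |z * laplaceWeight α d| ≤ c := by
  rw [abs_mul, abs_of_pos (laplaceWeight_pos α d)]
  exact (mul_le_of_le_one_right (abs_nonneg z) (laplaceWeight_le_one hα d)).trans hz

lemma laplaceExponent_mono (hα : 0 ≤ α) : Monotone (laplaceExponent α) := fun _ _ hxy =>
  Finset.sum_le_sum fun i _ => mul_le_mul_of_nonneg_left (hxy i) <|
    sub_nonneg.2 <| Real.exp_le_one_iff.2 <| neg_nonpos.2 (hα i)

lemma laplaceExponent_sub (α x y : ι → ℝ) :
    laplaceExponent α (x - y) = laplaceExponent α x - laplaceExponent α y := by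
  simp only [laplaceExponent, Pi.sub_apply, mul_sub, Finset.sum_sub_distrib]

lemma laplaceExponent_natCast_tsub (α : ι → ℝ) {d e : ι → ℕ} (hde : d ≤ e) :
    laplaceExponent α (fun i => ((e - d) i : ℕ)) =
      laplaceExponent α (fun i => e i) - laplaceExponent α fun i => d i := by
  rw [← laplaceExponent_sub]
  congr 1
  ext i
  exact Nat.cast_sub (hde i)

lemma one_sub_mul_le_exp_neg_mul (a : ℝ) (m : ℕ) :
    1 - (1 - Real.exp (-a)) * m ≤ Real.exp (-(a * m)) := by
  have := one_add_mul_sub_le_pow (a := Real.exp (-a)) (by linarith [Real.exp_pos (-a)]) m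
  rw [← Real.exp_nat_mul] at this
  calc 1 - (1 - Real.exp (-a)) * m = 1 + m * (Real.exp (-a) - 1) := by ring
    _ ≤ Real.exp (m * -a) := this
    _ = Real.exp (-(a * m)) := by ring_nf

lemma laplaceError_nonneg (hα : 0 ≤ α) (d : ι → ℕ) : 0 ≤ laplaceError α d := by
  classical
  suffices h : ∀ s : Finset ι,
      1 - ∑ i ∈ s, (1 - Real.exp (-α i)) * d i ≤ Real.exp (-∑ i ∈ s, α i * d i) from
    sub_nonneg.2 (h Finset.univ)
  intro s
  induction s using Finset.induction_on with
  | empty => simp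
  | insert i s hi ih =>
    rw [Finset.sum_insert hi, Finset.sum_insert hi, neg_add, Real.exp_add]
    have hi1 : Real.exp (-(α i * d i)) ≤ 1 :=
      Real.exp_le_one_iff.2 <| neg_nonpos.2 <| mul_nonneg (hα i) (Nat.cast_nonneg _)
    have hs1 : Real.exp (-∑ i ∈ s, α i * d i) ≤ 1 :=
      Real.exp_le_one_iff.2 <| neg_nonpos.2 <|
        Finset.sum_nonneg fun i _ => mul_nonneg (hα i) (Nat.cast_nonneg _)
    linarith [mul_nonneg (sub_nonneg.2 hi1) (sub_nonneg.2 hs1),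
      one_sub_mul_le_exp_neg_mul (α i) (d i)]

lemma laplaceError_le (hα : 0 ≤ α) (d : ι → ℕ) :
    laplaceError α d ≤ laplaceExponent α fun i => d i := by
  rw [laplaceError]
  linarith [laplaceWeight_le_one hα d]

lemma laplaceError_eq_zero_of_sum_le_one (α : ι → ℝ) {d : ι → ℕ} (hd : ∑ i, d i ≤ 1) :
    laplaceError α d = 0 := by
  classical
  obtain rfl | ⟨i, rfl⟩ : d = 0 ∨ ∃ i, d = Pi.single i 1 := by
    refine or_iff_not_imp_left.2 fun hne => ?_
    obtain ⟨i, hi⟩ := Function.ne_iff.1 hne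
    have hsplit := Finset.add_sum_erase Finset.univ d (Finset.mem_univ i)
    have hi0 : d i ≠ 0 := hi
    have hrest : ∑ j ∈ Finset.univ.erase i, d j = 0 := by omega
    refine ⟨i, funext fun j => ?_⟩
    rcases eq_or_ne j i with rfl | hji
    · rw [Pi.single_eq_same]
      omega
    · rw [Pi.single_eq_of_ne hji]
      exact Finset.sum_eq_zero_iff.1 hrest j (Finset.mem_erase.2 ⟨hji, Finset.mem_univ j⟩)
  · simp [laplaceError, laplaceWeight_zero, laplaceExponent]
  · simp [laplaceError, laplaceWeight, laplaceExponent, Pi.single_apply]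

/-- The sum of the errors of the increments of `f` between the first `n + 1` terms of `t`. -/
noncomputable def totalLaplaceError (α : ι → ℝ) (f : NNReal → ι → ℕ) (t : ℕ → NNReal) (n : ℕ) :
    ℝ :=
  ∑ j ∈ Finset.range n, laplaceError α (f (t (j + 1)) - f (t j))

lemma totalLaplaceError_nonneg (hα : 0 ≤ α) (f : NNReal → ι → ℕ) (t : ℕ → NNReal) (n : ℕ) :
    0 ≤ totalLaplaceError α f t n :=
  Finset.sum_nonneg fun _ _ => laplaceError_nonneg hα _

lemma totalLaplaceError_le (hα : 0 ≤ α) {f : NNReal → ι → ℕ} (hf : Monotone f) {t : ℕ → NNReal}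
    (ht : Monotone t) (n : ℕ) :
    totalLaplaceError α f t n ≤
      laplaceExponent α (fun i => f (t n) i) - laplaceExponent α fun i => f (t 0) i := by
  rw [← Finset.sum_range_sub fun j => laplaceExponent α fun i => f (t j) i]
  refine Finset.sum_le_sum fun j _ => (laplaceError_le hα _).trans_eq ?_
  exact laplaceExponent_natCast_tsub α (hf (ht j.le_succ))

lemma IsCountingPath.eventually_totalLaplaceError_uniformNode_eq_zero {f : NNReal → ι → ℕ}
    (hf : IsCountingPath f) (α : ι → ℝ) {r s : NNReal} (hrs : r ≤ s) :
    ∀ᶠ n in atTop, totalLaplaceError α f (uniformNode r s n) n = 0 := by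
  obtain ⟨δ, hδ, hinc⟩ := hf.exists_forall_dist_lt_sum_le_add_one (isCompact_Icc (a := r) (b := s))
  filter_upwards [eventually_dist_uniformNode_lt r s hδ] with n hn
  refine Finset.sum_eq_zero fun j hj => laplaceError_eq_zero_of_sum_le_one α ?_
  have hmono := hf.monotone (monotone_uniformNode r s n j.le_succ)
  calc ∑ i, (f (uniformNode r s n (j + 1)) - f (uniformNode r s n j)) i
      = ∑ i, f (uniformNode r s n (j + 1)) i - ∑ i, f (uniformNode r s n j) i :=
        Finset.sum_tsub_distrib _ fun i _ => hmono i
    _ ≤ 1 := tsub_le_iff_left.2 <|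
        hinc _ (uniformNode_mem_Icc hrs (Finset.mem_range.1 hj).le) _ (hn j)

end LaplaceWeight

section Recurrence

lemma abs_exp_neg_sub_one_sub_le_sq {x : ℝ} (hx : 0 ≤ x) : |Real.exp (-x) - (1 - x)| ≤ x ^ 2 := by
  rw [abs_of_nonneg (sub_nonneg.2 (Real.one_sub_le_exp_neg x))]
  rcases le_total x 1 with hx1 | hx1
  · have := Real.abs_exp_sub_one_sub_id_le (x := -x) (by rwa [abs_neg, abs_of_nonneg hx])
    linarith [le_abs_self (Real.exp (-x) - 1 - -x), neg_sq x]
  · nlinarith [Real.exp_le_one_iff.2 (neg_nonpos.2 hx)]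

lemma abs_sub_exp_mul_le_of_recurrence {a e l : ℕ → ℝ} {c : ℝ} (hl : Monotone l)
    (ha : ∀ j, |a j| ≤ c) (hrec : ∀ j, a (j + 1) = (1 - (l (j + 1) - l j)) * a j + e j) (n : ℕ) :
    |a n - Real.exp (-(l n - l 0)) * a 0| ≤
      ∑ j ∈ Finset.range n, |e j| + c * ∑ j ∈ Finset.range n, (l (j + 1) - l j) ^ 2 := by
  induction n with
  | zero => simp
  | succ n ih =>
    set δ := l (n + 1) - l n with hδ
    have hδ0 : 0 ≤ δ := sub_nonneg.2 (hl n.le_succ)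
    have hsplit : a (n + 1) - Real.exp (-(l (n + 1) - l 0)) * a 0 =
        Real.exp (-δ) * (a n - Real.exp (-(l n - l 0)) * a 0)
          - (Real.exp (-δ) - (1 - δ)) * a n + e n := by
      have hexp : Real.exp (-(l (n + 1) - l 0)) = Real.exp (-δ) * Real.exp (-(l n - l 0)) := by
        rw [← Real.exp_add, hδ]
        ring_nf
      rw [hexp, hrec n]
      ring
    have hcontract : |Real.exp (-δ) * (a n - Real.exp (-(l n - l 0)) * a 0)| ≤
        |a n - Real.exp (-(l n - l 0)) * a 0| := by
      rw [abs_mul, Real.abs_exp]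
      exact mul_le_of_le_one_left (abs_nonneg _) (Real.exp_le_one_iff.2 (neg_nonpos.2 hδ0))
    have hquad : |(Real.exp (-δ) - (1 - δ)) * a n| ≤ c * δ ^ 2 := by
      rw [abs_mul, mul_comm c]
      exact mul_le_mul (abs_exp_neg_sub_one_sub_le_sq hδ0) (ha n) (abs_nonneg _) (sq_nonneg δ)
    rw [hsplit, Finset.sum_range_succ, Finset.sum_range_succ, mul_add]
    linarith [abs_add_le (Real.exp (-δ) * (a n - Real.exp (-(l n - l 0)) * a 0)
      - (Real.exp (-δ) - (1 - δ)) * a n) (e n),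
      abs_sub (Real.exp (-δ) * (a n - Real.exp (-(l n - l 0)) * a 0))
        ((Real.exp (-δ) - (1 - δ)) * a n)]

end Recurrence

section MartingaleIncrement

variable {Ω τ : Type*} {mΩ : MeasurableSpace Ω} {P : Measure Ω} [IsFiniteMeasure P] [Preorder τ]
  {𝓕 : Filtration τ mΩ}

lemma integral_mul_martingale_sub_eq_zero {M : τ → Ω → ℝ} (hM : Martingale M 𝓕 P) {a b : τ}
    (hab : a ≤ b) {Z : Ω → ℝ} (hZ : StronglyMeasurable[𝓕 a] Z)
    (hint : Integrable (Z * (M b - M a)) P) : ∫ ω, Z ω * (M b ω - M a ω) ∂P = 0 := by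
  have hsub : P[M b - M a | 𝓕 a] =ᵐ[P] 0 := by
    filter_upwards [condExp_sub (hM.integrable b) (hM.integrable a) (𝓕 a),
      hM.condExp_ae_eq hab, hM.condExp_ae_eq le_rfl] with ω hω hb ha
    rw [hω, Pi.sub_apply, hb, ha, sub_self, Pi.zero_apply]
  have hmul : P[Z * (M b - M a) | 𝓕 a] =ᵐ[P] 0 := by
    filter_upwards [condExp_mul_of_stronglyMeasurable_left hZ hint
      ((hM.integrable b).sub (hM.integrable a)), hsub] with ω hω h0
    rw [hω, Pi.mul_apply, h0, Pi.zero_apply, mul_zero]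
  calc ∫ ω, Z ω * (M b ω - M a ω) ∂P = ∫ ω, (P[Z * (M b - M a) | 𝓕 a]) ω ∂P :=
        (integral_condExp (𝓕.le a)).symm
    _ = 0 := by rw [integral_congr_ae hmul, Pi.zero_def, integral_zero]

variable {X : τ → Ω → ℝ} {l : τ → ℝ}

lemma integrable_of_martingale_sub (hmart : Martingale (fun t ω => X t ω - l t) 𝓕 P) (t : τ) :
    Integrable (X t) P :=
  ((hmart.integrable t).add (integrable_const (l t))).congr
    (Eventually.of_forall fun _ => sub_add_cancel _ _)

lemma monotone_of_martingale_sub [NeZero P] (hX : ∀ ω, Monotone (X · ω))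
    (hmart : Martingale (fun t ω => X t ω - l t) 𝓕 P) : Monotone l := by
  intro a b hab
  have hint := integrable_of_martingale_sub hmart
  have hmean := hmart.setIntegral_eq hab MeasurableSet.univ
  simp only [setIntegral_univ] at hmean
  rw [integral_sub (hint a) (integrable_const _), integral_sub (hint b) (integrable_const _),
    integral_const, integral_const, smul_eq_mul, smul_eq_mul] at hmean
  have hXle : ∫ ω, X a ω ∂P ≤ ∫ ω, X b ω ∂P :=
    integral_mono (hint a) (hint b) fun ω => hX ω hab
  have hpos : 0 < P.real Set.univ := measureReal_univ_pos
  exact le_of_mul_le_mul_left (by linarith) hpos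

end MartingaleIncrement

section CountingProcess

variable {Ω ι : Type*} {mΩ : MeasurableSpace Ω} {𝓕 : Filtration NNReal mΩ}

lemma adapted_pi {n : ι → NNReal → Ω → ℕ} (hn : ∀ i, Adapted 𝓕 (n i)) :
    Adapted 𝓕 fun t ω i => n i t ω :=
  fun t => @measurable_pi_lambda Ω ι _ (𝓕 t) _ _ fun i => hn i t

lemma measurable_comp_sub_of_adapted {E β : Type*} [Sub E] [Countable E] [MeasurableSpace E]
    [DiscreteMeasurableSpace E] [MeasurableSpace β] {X : NNReal → Ω → E} (hX : Adapted 𝓕 X)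
    (G : E → β) {a b c : NNReal} (hac : a ≤ c) (hbc : b ≤ c) :
    Measurable[𝓕 c] fun ω => G (X b ω - X a ω) :=
  (Measurable.of_discrete (f := fun p : E × E => G (p.1 - p.2))).comp
    (((hX b).mono (𝓕.mono hbc) le_rfl).prodMk ((hX a).mono (𝓕.mono hac) le_rfl))

variable [Fintype ι] {P : Measure Ω} {N : NNReal → Ω → ι → ℕ} {α : ι → ℝ} {l : NNReal → ℝ}

lemma martingale_laplaceExponent_sub {Λ : NNReal → ι → ℝ} (α : ι → ℝ)
    (hmart : ∀ i, Martingale (fun t ω => (N t ω i : ℝ) - Λ t i) 𝓕 P) :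
    Martingale (fun t ω => laplaceExponent α (fun i => N t ω i) - laplaceExponent α (Λ t)) 𝓕 P := by
  have hsum : Martingale (∑ i, (1 - Real.exp (-α i)) • fun t ω => (N t ω i : ℝ) - Λ t i) 𝓕 P :=
    Finset.sum_induction _ (Martingale · 𝓕 P) (fun _ _ => Martingale.add)
      (martingale_zero _ _ _) fun i _ => (hmart i).smul _
  convert hsum with t ω
  rw [← laplaceExponent_sub]
  simp [laplaceExponent]

lemma integrable_laplaceError_tsub (hadapt : Adapted 𝓕 N) (hmono : ∀ ω, Monotone (N · ω))
    (hα : 0 ≤ α) (hint : ∀ t, Integrable (fun ω => laplaceExponent α fun i => N t ω i) P)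
    {a b : NNReal} (hab : a ≤ b) : Integrable (fun ω => laplaceError α (N b ω - N a ω)) P := by
  have hmeas : Measurable fun ω => laplaceError α (N b ω - N a ω) :=
    (measurable_comp_sub_of_adapted hadapt _ hab le_rfl).mono (𝓕.le b) le_rfl
  refine ((hint b).sub (hint a)).mono' hmeas.aestronglyMeasurable
    (Eventually.of_forall fun ω => ?_)
  rw [Real.norm_of_nonneg (laplaceError_nonneg hα _)]
  exact (laplaceError_le hα _).trans_eq (laplaceExponent_natCast_tsub α (hmono ω hab))

lemma abs_integral_mul_laplaceError_le {X : Ω → ℝ} {c : ℝ} (hc : ∀ ω, |X ω| ≤ c) (hα : 0 ≤ α)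
    {D : Ω → ι → ℕ} (hint : Integrable (fun ω => laplaceError α (D ω)) P) :
    |∫ ω, X ω * laplaceError α (D ω) ∂P| ≤ c * ∫ ω, laplaceError α (D ω) ∂P := by
  rw [← integral_const_mul, ← Real.norm_eq_abs]
  refine norm_integral_le_of_norm_le (hint.const_mul c) (Eventually.of_forall fun ω => ?_)
  rw [norm_mul, Real.norm_of_nonneg (laplaceError_nonneg hα _)]
  exact mul_le_mul_of_nonneg_right (hc ω) (laplaceError_nonneg hα _)

lemma tendsto_integral_totalLaplaceError_uniformNode (hadapt : Adapted 𝓕 N)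
    (hpath : ∀ ω, IsCountingPath (N · ω)) (hα : 0 ≤ α)
    (hint : ∀ t, Integrable (fun ω => laplaceExponent α fun i => N t ω i) P) {r s : NNReal}
    (hrs : r ≤ s) :
    Tendsto (fun n => ∫ ω, totalLaplaceError α (N · ω) (uniformNode r s n) n ∂P) atTop (𝓝 0) := by
  rw [← integral_zero Ω ℝ (μ := P)]
  refine tendsto_integral_filter_of_dominated_convergence
    (fun ω => laplaceExponent α (fun i => N s ω i) - laplaceExponent α fun i => N r ω i)
    (Eventually.of_forall fun n => ?_) ?_ ((hint s).sub (hint r))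
    (Eventually.of_forall fun ω => tendsto_const_nhds.congr' <| EventuallyEq.symm <|
      (hpath ω).eventually_totalLaplaceError_uniformNode_eq_zero α hrs)
  · exact (integrable_finsetSum _ fun j _ => integrable_laplaceError_tsub hadapt
      (fun ω => (hpath ω).monotone) hα hint
      (monotone_uniformNode r s n j.le_succ)).aestronglyMeasurable
  · filter_upwards [eventually_ne_atTop 0] with n hn
    refine Eventually.of_forall fun ω => ?_
    rw [Real.norm_of_nonneg (totalLaplaceError_nonneg hα _ _ _)]
    have := totalLaplaceError_le hα (hpath ω).monotone (monotone_uniformNode r s n) n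
    rwa [uniformNode_self hrs hn, uniformNode_zero] at this

variable [IsFiniteMeasure P]

lemma integrable_laplaceWeight_tsub (hadapt : Adapted 𝓕 N) (hα : 0 ≤ α) (a b : NNReal) :
    Integrable (fun ω => laplaceWeight α (N b ω - N a ω)) P := by
  have hmeas : Measurable fun ω => laplaceWeight α (N b ω - N a ω) :=
    (measurable_comp_sub_of_adapted hadapt _ (le_max_left a b) (le_max_right a b)).mono
      (𝓕.le (max a b)) le_rfl
  refine Integrable.of_bound hmeas.aestronglyMeasurable 1 (Eventually.of_forall fun ω => ?_)
  rw [Real.norm_of_nonneg (laplaceWeight_pos α _).le]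
  exact laplaceWeight_le_one hα _

lemma integral_mul_laplaceWeight_tsub_eq_add (hadapt : Adapted 𝓕 N)
    (hmono : ∀ ω, Monotone (N · ω)) (hα : 0 ≤ α)
    (hmart : Martingale (fun t ω => laplaceExponent α (fun i => N t ω i) - l t) 𝓕 P)
    {a b : NNReal} (hab : a ≤ b) {Z : Ω → ℝ} (hZ : StronglyMeasurable[𝓕 a] Z) {c : ℝ}
    (hc : ∀ ω, |Z ω| ≤ c) :
    ∫ ω, Z ω * laplaceWeight α (N b ω - N a ω) ∂P =
      (1 - (l b - l a)) * ∫ ω, Z ω ∂P + ∫ ω, Z ω * laplaceError α (N b ω - N a ω) ∂P := by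
  let M : NNReal → Ω → ℝ := fun t ω => laplaceExponent α (fun i => N t ω i) - l t
  have hZm : AEStronglyMeasurable Z P := (hZ.mono (𝓕.le a)).aestronglyMeasurable
  have hZint : Integrable (fun ω => (1 - (l b - l a)) * Z ω) P :=
    (Integrable.of_bound hZm c (Eventually.of_forall hc)).const_mul _
  have hZM : Integrable (fun ω => Z ω * (M b ω - M a ω)) P :=
    ((hmart.integrable b).sub (hmart.integrable a)).bdd_mul hZm (Eventually.of_forall hc)
  have hZE : Integrable (fun ω => Z ω * laplaceError α (N b ω - N a ω)) P :=
    (integrable_laplaceError_tsub hadapt hmono hα (integrable_of_martingale_sub hmart)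
      hab).bdd_mul hZm (Eventually.of_forall hc)
  have hweight : ∀ ω, Z ω * laplaceWeight α (N b ω - N a ω) =
      (1 - (l b - l a)) * Z ω - Z ω * (M b ω - M a ω)
        + Z ω * laplaceError α (N b ω - N a ω) := fun ω => by
    rw [laplaceError, laplaceExponent_natCast_tsub α (hmono ω hab)]
    ring
  simp_rw [hweight]
  rw [integral_add (hZint.sub' hZM) hZE, integral_sub hZint hZM, integral_const_mul,
    integral_mul_martingale_sub_eq_zero hmart hab hZ hZM, sub_zero]

lemma integral_mul_laplaceWeight_tsub_eq_add_of_le (hadapt : Adapted 𝓕 N)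
    (hmono : ∀ ω, Monotone (N · ω)) (hα : 0 ≤ α)
    (hmart : Martingale (fun t ω => laplaceExponent α (fun i => N t ω i) - l t) 𝓕 P)
    {r a b : NNReal} (hra : r ≤ a) (hab : a ≤ b) {Z : Ω → ℝ} (hZ : StronglyMeasurable[𝓕 r] Z)
    {c : ℝ} (hc : ∀ ω, |Z ω| ≤ c) :
    ∫ ω, Z ω * laplaceWeight α (N b ω - N r ω) ∂P =
      (1 - (l b - l a)) * ∫ ω, Z ω * laplaceWeight α (N a ω - N r ω) ∂P
        + ∫ ω, Z ω * laplaceWeight α (N a ω - N r ω) * laplaceError α (N b ω - N a ω) ∂P := by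
  have hmul : ∀ ω, Z ω * laplaceWeight α (N b ω - N r ω) =
      Z ω * laplaceWeight α (N a ω - N r ω) * laplaceWeight α (N b ω - N a ω) := fun ω => by
    rw [mul_assoc, mul_comm (laplaceWeight α (N a ω - N r ω)), ← laplaceWeight_add]
    exact congrArg (Z ω * laplaceWeight α ·)
      (tsub_add_tsub_cancel (hmono ω hab) (hmono ω hra)).symm
  simp_rw [hmul]
  exact integral_mul_laplaceWeight_tsub_eq_add hadapt hmono hα hmart hab
    ((hZ.mono (𝓕.mono hra)).mul
      (measurable_comp_sub_of_adapted hadapt _ hra le_rfl).stronglyMeasurable)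
    fun ω => abs_mul_laplaceWeight_le hα (hc ω) _

lemma abs_integral_mul_laplaceWeight_sub_le (hadapt : Adapted 𝓕 N)
    (hmono : ∀ ω, Monotone (N · ω)) (hα : 0 ≤ α)
    (hmart : Martingale (fun t ω => laplaceExponent α (fun i => N t ω i) - l t) 𝓕 P)
    (hl : Monotone l) {t : ℕ → NNReal} (ht : Monotone t) {Z : Ω → ℝ}
    (hZ : StronglyMeasurable[𝓕 (t 0)] Z) {c : ℝ} (hc : ∀ ω, |Z ω| ≤ c) (n : ℕ) :
    |∫ ω, Z ω * laplaceWeight α (N (t n) ω - N (t 0) ω) ∂P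
        - Real.exp (-(l (t n) - l (t 0))) * ∫ ω, Z ω ∂P| ≤
      c * ∫ ω, totalLaplaceError α (N · ω) t n ∂P
        + c * P.real Set.univ * ∑ j ∈ Finset.range n, (l (t (j + 1)) - l (t j)) ^ 2 := by
  have hXc : ∀ j ω, |Z ω * laplaceWeight α (N (t j) ω - N (t 0) ω)| ≤ c := fun j ω =>
    abs_mul_laplaceWeight_le hα (hc ω) _
  have hE : ∀ j, Integrable (fun ω => laplaceError α (N (t (j + 1)) ω - N (t j) ω)) P := fun j =>
    integrable_laplaceError_tsub hadapt hmono hα (integrable_of_martingale_sub hmart) (ht j.le_succ)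
  have hint : ∀ j, |∫ ω, Z ω * laplaceWeight α (N (t j) ω - N (t 0) ω) ∂P| ≤
      c * P.real Set.univ := fun j =>
    (Real.norm_eq_abs _).symm.trans_le <|
      norm_integral_le_of_norm_le_const (Eventually.of_forall (hXc j))
  have hrec := abs_sub_exp_mul_le_of_recurrence (hl.comp ht) hint
    (fun j => integral_mul_laplaceWeight_tsub_eq_add_of_le hadapt hmono hα hmart
      (ht j.zero_le) (ht j.le_succ) hZ hc) n
  simp only [tsub_self, laplaceWeight_zero, mul_one] at hrec
  refine hrec.trans (add_le_add_left ?_ _)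
  simp only [totalLaplaceError]
  rw [integral_finsetSum _ fun j _ => hE j, Finset.mul_sum]
  exact Finset.sum_le_sum fun j _ => abs_integral_mul_laplaceError_le (hXc j) hα (hE j)

lemma integral_mul_laplaceWeight_tsub [NeZero P] (hadapt : Adapted 𝓕 N)
    (hpath : ∀ ω, IsCountingPath (N · ω)) (hα : 0 ≤ α)
    (hmart : Martingale (fun t ω => laplaceExponent α (fun i => N t ω i) - l t) 𝓕 P)
    (hl : Continuous l) {r s : NNReal} (hrs : r ≤ s) {Z : Ω → ℝ} (hZ : StronglyMeasurable[𝓕 r] Z)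
    {c : ℝ} (hc : ∀ ω, |Z ω| ≤ c) :
    ∫ ω, Z ω * laplaceWeight α (N s ω - N r ω) ∂P = Real.exp (-(l s - l r)) * ∫ ω, Z ω ∂P := by
  have hmono : ∀ ω, Monotone (N · ω) := fun ω => (hpath ω).monotone
  have hlmono : Monotone l := monotone_of_martingale_sub
    (fun ω a b hab => laplaceExponent_mono hα fun i => Nat.cast_le.2 (hmono ω hab i)) hmart
  have hlim := ((tendsto_integral_totalLaplaceError_uniformNode hadapt hpath hα
    (integrable_of_martingale_sub hmart) hrs).const_mul c).add
      ((tendsto_sum_sq_sub_uniformNode hlmono hl hrs).const_mul (c * P.real Set.univ))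
  rw [mul_zero, mul_zero, add_zero] at hlim
  refine sub_eq_zero.1 (abs_nonpos_iff.1 (ge_of_tendsto hlim ?_))
  filter_upwards [eventually_ne_atTop 0] with n hn
  have := abs_integral_mul_laplaceWeight_sub_le hadapt hmono hα hmart hlmono
    (monotone_uniformNode r s n) (by rwa [uniformNode_zero]) hc n
  rwa [uniformNode_self hrs hn, uniformNode_zero] at this

theorem condExp_laplaceWeight_tsub (hadapt : Adapted 𝓕 N)
    (hpath : ∀ ω, IsCountingPath (N · ω)) (hα : 0 ≤ α)
    (hmart : Martingale (fun t ω => laplaceExponent α (fun i => N t ω i) - l t) 𝓕 P)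
    (hl : Continuous l) {r s : NNReal} (hrs : r ≤ s) :
    P[fun ω => laplaceWeight α (N s ω - N r ω) | 𝓕 r] =ᵐ[P] fun _ => Real.exp (-(l s - l r)) := by
  rcases eq_zero_or_neZero P with rfl | _
  · simp only [EventuallyEq, ae_zero, eventually_bot]
  refine (ae_eq_condExp_of_forall_setIntegral_eq (𝓕.le r)
    (integrable_laplaceWeight_tsub hadapt hα r s)
    (fun A _ _ => (integrable_const _).integrableOn) (fun A hA _ => ?_)
    stronglyMeasurable_const.aestronglyMeasurable).symm
  have hind := integral_mul_laplaceWeight_tsub hadapt hpath hα hmart hl hrs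
    (Z := A.indicator 1) (stronglyMeasurable_one.indicator hA) (c := 1) fun ω => by
      by_cases hω : ω ∈ A <;> simp [hω]
  have hmul : ∀ ω, A.indicator 1 ω * laplaceWeight α (N s ω - N r ω) =
      A.indicator (fun ω => laplaceWeight α (N s ω - N r ω)) ω := fun ω => by
    by_cases hω : ω ∈ A <;> simp [hω]
  simp_rw [hmul] at hind
  rw [integral_indicator (𝓕.le r A hA), integral_indicator_one (𝓕.le r A hA)] at hind
  rw [hind, setIntegral_const, smul_eq_mul, mul_comm]

end CountingProcess

theorem stmt18_general {Ω ι : Type*} [Fintype ι] {mΩ : MeasurableSpace Ω} (P : Measure Ω)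
    [IsFiniteMeasure P] (𝓕 : Filtration NNReal mΩ) (N : NNReal → Ω → ι → ℕ)
    (hadapt : Adapted 𝓕 N) (hpath : ∀ ω, IsCountingPath fun t => N t ω) (Λ : NNReal → ι → ℝ)
    (hΛ : Continuous Λ) (hmart : ∀ i, Martingale (fun t ω => (N t ω i : ℝ) - Λ t i) 𝓕 P)
    {r s : NNReal} (hrs : r ≤ s) {α : ι → ℝ} (hα : ∀ i, 0 ≤ α i) :
    P[fun ω => Real.exp (-∑ i, α i * ((N s ω i : ℝ) - N r ω i)) | 𝓕 r] =ᵐ[P] fun _ =>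
      ∏ i, Real.exp (-(Λ s i - Λ r i) * (1 - Real.exp (-α i))) := by
  have hweight : ∀ ω, Real.exp (-∑ i, α i * ((N s ω i : ℝ) - N r ω i)) =
      laplaceWeight α (N s ω - N r ω) := fun ω => by
    simp only [laplaceWeight, Pi.sub_apply, Nat.cast_sub ((hpath ω).monotone hrs _)]
  have hprod : ∏ i, Real.exp (-(Λ s i - Λ r i) * (1 - Real.exp (-α i))) =
      Real.exp (-(laplaceExponent α (Λ s) - laplaceExponent α (Λ r))) := by
    rw [← Real.exp_sum, ← laplaceExponent_sub, laplaceExponent, ← Finset.sum_neg_distrib]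
    simp only [Pi.sub_apply, neg_mul, mul_comm]
  have hcont : Continuous fun t => laplaceExponent α (Λ t) := by
    unfold laplaceExponent
    fun_prop
  simp only [hweight, hprod]
  exact condExp_laplaceWeight_tsub hadapt hpath hα (martingale_laplaceExponent_sub α hmart)
    hcont hrs

/-- If `N₁, …, N_k` are point (counting) processes adapted to a
filtration `𝓕`, starting from `0`, nondecreasing, right-continuous, with all jumps of
size one, no two of them jumping at the same time (the sum also has unit jumps), and
such that `N_i(s) - C_i s` is a martingale, then for all `0 ≤ r < s` and all
`α_i ≥ 0`,
`E[exp(-∑ᵢ αᵢ (Nᵢ(s) - Nᵢ(r))) | 𝓕 r] = ∏ᵢ exp(-Cᵢ (s - r)(1 - e^{-αᵢ}))` a.s.,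
which is the characterization of `N₁, …, N_k` being mutually independent Poisson
processes with intensities `C₁, …, C_k`. -/
theorem stmt18 {Ω : Type*} {mΩ : MeasurableSpace Ω}
    (P : Measure Ω) [IsProbabilityMeasure P]
    (𝓕 : Filtration NNReal mΩ)
    (k : ℕ) (Np : Fin k → NNReal → Ω → ℕ)
    (hadapt : ∀ i, Adapted 𝓕 (Np i))
    (hzero : ∀ i ω, Np i 0 ω = 0)
    (hmono : ∀ i ω, Monotone (fun s => Np i s ω))
    (hrc : ∀ i ω s, ∃ δ : NNReal, 0 < δ ∧
      ∀ t : NNReal, s ≤ t → t < s + δ → Np i t ω = Np i s ω)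
    (hunit : ∀ i ω, UnitJumps (fun s => Np i s ω))
    (hsum_unit : ∀ ω, UnitJumps (fun s => ∑ i, Np i s ω))
    (C : Fin k → ℝ) (hC : ∀ i, 0 ≤ C i)
    (hmart : ∀ i, Martingale (fun (s : NNReal) (ω : Ω) =>
      (Np i s ω : ℝ) - C i * (s : ℝ)) 𝓕 P) :
    ∀ r s : NNReal, r < s → ∀ α : Fin k → ℝ, (∀ i, 0 ≤ α i) →
      P[(fun ω => Real.exp (-(∑ i, α i * ((Np i s ω : ℝ) - (Np i r ω : ℝ))))) | 𝓕 r]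
        =ᵐ[P] fun _ =>
          ∏ i, Real.exp (-(C i) * ((s : ℝ) - (r : ℝ)) * (1 - Real.exp (-(α i)))) := by
  intro r s hrs α hα
  simpa only [← mul_sub, ← neg_mul] using
    stmt18_general P 𝓕 (fun t ω i => Np i t ω) (adapted_pi hadapt)
      (fun ω => .of_components (hmono · ω) (hrc · ω) (hsum_unit ω))
      (fun t i => C i * t) (by fun_prop) hmart hrs.le hα
end
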